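/- arXiv:1505.06059 — 2 statements merged into one kernel-verified Lean document; each statement's English description precedes it below -/
import Mathlib

section
/- Let G be a finite group. Then D(G) = |G| if and only if G is cyclic or G is isomorphic to a dihedral group of order 2n for some odd n ≥ 3. -/
/-- `S` is a product-one sequence over `G`: some ordering of its terms multiplies to `1`. -/
def IsProductOne {G : Type*} [Group G] (S : Multiset G) : Prop :=
  ∃ l : List G, (l : Multiset G) = S ∧ l.prod = 1

/-- The set of products `π(S)` of all orderings of the terms of `S`. -/
def piSet {G : Type*} [Group G] (S : Multiset G) : Set G :=
  {g | ∃ l : List G, (l : Multiset G) = S ∧ l.prod = g}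

/-- The set `Π(S)` of products of nontrivial subsequences of `S`. -/
def subseqProds {G : Type*} [Group G] (S : Multiset G) : Set G :=
  {g | ∃ T : Multiset G, T ≤ S ∧ T ≠ 0 ∧ g ∈ piSet T}

/-- `S` is product-one free. -/
def ProductOneFree {G : Type*} [Group G] (S : Multiset G) : Prop :=
  (1 : G) ∉ subseqProds S

/-- `S` is an atom of the monoid `B(G)` of product-one sequences: it is a nontrivial
product-one sequence that is not the concatenation of two nontrivial product-one sequences. -/
def IsPOAtom {G : Type*} [Group G] (S : Multiset G) : Prop :=
  IsProductOne S ∧ S ≠ 0 ∧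
    ∀ T₁ T₂ : Multiset G, IsProductOne T₁ → IsProductOne T₂ → T₁ + T₂ = S →
      T₁ = 0 ∨ T₂ = 0

/-- The large Davenport constant `D(G)`: the supremum of lengths of atoms of `B(G)`. -/
noncomputable def largeD (G : Type*) [Group G] : ℕ :=
  sSup {n : ℕ | ∃ S : Multiset G, IsPOAtom S ∧ Multiset.card S = n}

/-- The small Davenport constant `d(G)`: the supremum of lengths of product-one free
sequences over `G`. -/
noncomputable def smalld (G : Type*) [Group G] : ℕ :=
  sSup {n : ℕ | ∃ S : Multiset G, ProductOneFree S ∧ Multiset.card S = n}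

section Davenport

theorem exists_le_of_le_map {α β : Type*} (f : α → β) (M : Multiset α) (s : Multiset β)
    (h : s ≤ M.map f) : ∃ M' ≤ M, M'.map f = s := by
  induction M using Quotient.inductionOn with
  | h l =>
    induction s using Quotient.inductionOn with
    | h t =>
      obtain ⟨t', ht', hs⟩ : List.Subperm t (l.map f) := h
      obtain ⟨l', hl', rfl⟩ := List.sublist_map_iff.mp hs
      exact ⟨(l' : Multiset α), Multiset.coe_le.mpr hl'.subperm, by
        simpa using ht'⟩

theorem map_add_split {α β : Type*} (f : α → β) (M : Multiset α) (s t : Multiset β)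
    (h : M.map f = s + t) : ∃ M₁ M₂, M = M₁ + M₂ ∧ M₁.map f = s ∧ M₂.map f = t := by
  obtain ⟨M₁, h1, h2⟩ := exists_le_of_le_map f M s (by rw [h]; exact Multiset.le_add_right s t)
  obtain ⟨M₂, rfl⟩ := Multiset.le_iff_exists_add.mp h1
  refine ⟨M₁, M₂, rfl, h2, ?_⟩
  rw [Multiset.map_add, h2] at h
  exact add_left_cancel h

theorem le_add_split {α : Type*} (s a b : Multiset α) (h : s ≤ a + b) :
    ∃ s₁ ≤ a, ∃ s₂ ≤ b, s = s₁ + s₂ := by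
  classical
  refine ⟨s ∩ a, Multiset.inter_le_right, s - a, ?_, ?_⟩
  · rw [Multiset.sub_le_iff_le_add]; rwa [add_comm]
  · rw [add_comm]; exact (Multiset.sub_add_inter s a).symm

/-- zero-sum lemma -/
theorem zero_sum_const {A : Type*} [CommGroup A] [Finite A] (t : Multiset A)
    (hc : Nat.card A ≤ Multiset.card t + 1)
    (h : ∀ s ≤ t, s ≠ 0 → Multiset.card s < Nat.card A → s.prod ≠ 1) :
    ∀ x ∈ t, ∀ y ∈ t, x = y := by
  classical
  intro x hx y hy
  by_contra hxy
  obtain ⟨t', rfl⟩ := Multiset.exists_cons_of_mem hx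
  have hy' : y ∈ t' := by
    rcases Multiset.mem_cons.mp hy with h | h
    · exact absurd h.symm hxy
    · exact h
  obtain ⟨t'', rfl⟩ := Multiset.exists_cons_of_mem hy'
  induction t'' using Quotient.inductionOn with
  | h l =>
  set m := Nat.card A with hm
  have hlen : m ≤ l.length + 3 := by simpa using hc
  have hsub : ∀ s : List A, List.Subperm s (x :: y :: l) → s ≠ [] → s.length < m → s.prod ≠ 1 := by
    intro s hs h1 h2
    have := h (s : Multiset A) hs (by simpa using h1) (by simpa using h2)
    simpa using this
  -- prefixes
  have inj : Set.InjOn (fun i => ((x :: y :: l).take i).prod) (Finset.range m : Set ℕ) := by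
    have key : ∀ i j, i < j → j < m → ((x :: y :: l).take i).prod ≠ ((x :: y :: l).take j).prod := by
      intro i j hij hj heq
      have h1 : (x :: y :: l).take j = (x :: y :: l).take i ++ ((x :: y :: l).take j).drop i := by
        conv_lhs => rw [← List.take_append_drop i ((x :: y :: l).take j)]
        rw [List.take_take, min_eq_left hij.le]
      rw [h1, List.prod_append] at heq
      have h2 : (((x :: y :: l).take j).drop i).prod = 1 := by
        simpa using heq
      refine hsub _ ?_ ?_ ?_ h2
      · exact ((List.drop_sublist _ _).trans (List.take_sublist _ _)).subperm
      · intro h0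
        have := congrArg List.length h0
        simp at this
        omega
      · simp; omega
    intro i hi j hj heq
    simp only [Finset.coe_range, Set.mem_Iio] at hi hj
    rcases lt_trichotomy i j with h | h | h
    · exact absurd heq (key i j h hj)
    · exact h
    · exact absurd heq.symm (key j i h hi)
  have hy1 : y ≠ 1 := by
    intro h1
    have hm1 : 1 < m := by
      have := nontrivial_of_ne x y hxy
      exact Finite.one_lt_card
    refine hsub [y] ?_ (by simp) (by simpa using hm1) (by simpa using h1)
    exact (List.Sublist.cons _ (by simp)).subperm
  let := Fintype.ofFinite A
  have himg : (Finset.range m).image (fun i => ((x :: y :: l).take i).prod) = Finset.univ := by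
    apply Finset.eq_univ_of_card
    rw [Finset.card_image_of_injOn inj, Finset.card_range, hm, Nat.card_eq_fintype_card]
  have : y ∈ (Finset.range m).image (fun i => ((x :: y :: l).take i).prod) := by
    rw [himg]; exact Finset.mem_univ _
  obtain ⟨i, hi, hiy⟩ := Finset.mem_image.mp this
  rw [Finset.mem_range] at hi
  match i, hi, hiy with
  | 0, _, hiy => exact hy1 (by simpa using hiy.symm)
  | 1, _, hiy => exact hxy (by simpa using hiy)
  | (i+2), hi, hiy =>
    have h3 : (x :: l.take i).prod = 1 := by
      simp only [List.take_succ_cons, List.prod_cons] at hiy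
      rw [List.prod_cons]
      have : y * (x * (l.take i).prod) = y * 1 := by
        rw [mul_one, mul_left_comm]; exact hiy
      exact mul_left_cancel this
    refine hsub _ ?_ (by simp) ?_ h3
    · exact (List.Sublist.cons_cons _ (List.Sublist.cons _ (List.take_sublist _ _))).subperm
    · simp; omega

variable {G : Type*} [Group G]

theorem atom_split {S : Multiset G} (hS : IsPOAtom S) (l₁ l₂ : List G)
    (h : ((l₁ ++ l₂ : List G) : Multiset G) = S) (h1 : l₁.prod = 1) (h2 : l₂.prod = 1) :
    l₁ = [] ∨ l₂ = [] := by
  have := hS.2.2 (l₁ : Multiset G) (l₂ : Multiset G) ⟨l₁, rfl, h1⟩ ⟨l₂, rfl, h2⟩ (by simpa using h)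
  simpa using this

theorem prefix_ne {S : Multiset G} (hS : IsPOAtom S) (l : List G) (h : (l : Multiset G) = S)
    (h1 : l.prod = 1) (i j : ℕ) (hij : i < j) (hj : j < l.length) :
    (l.take i).prod ≠ (l.take j).prod := by
  intro heq
  have e1 : l.take j = l.take i ++ (l.take j).drop i := by
    conv_lhs => rw [← List.take_append_drop i (l.take j)]
    rw [List.take_take, min_eq_left hij.le]
  have e2 : ((l.take j).drop i).prod = 1 := by
    rw [e1, List.prod_append] at heq
    simpa using heq
  have e3 : (l.take i ++ l.drop j).prod = 1 := by
    rw [List.prod_append, heq, ← List.prod_append, List.take_append_drop, h1]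
  have e4 : (((l.take j).drop i ++ (l.take i ++ l.drop j) : List G) : Multiset G) = S := by
    rw [← h]
    conv_rhs => rw [← List.take_append_drop j l, e1]
    simp only [← Multiset.coe_add]
    abel
  rcases atom_split hS _ _ e4 e2 e3 with h0 | h0
  · have := congrArg List.length h0
    simp at this
    omega
  · have := congrArg List.length h0
    simp at this
    omega

def PrimL (A : Subgroup G) (U : List G) : Prop :=
  U ≠ [] ∧ U.prod ∈ A ∧ ∀ i, 0 < i → i < U.length → (U.take i).prod ∉ A

open Classical in
theorem count_flatten (A : Subgroup G) (LL : List (List G)) (h : ∀ U ∈ LL, PrimL A U) :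
    Nat.count (fun i => (LL.flatten.take i).prod ∈ A) LL.flatten.length = LL.length := by
  induction LL with
  | nil => simp
  | cons U LL ih =>
    have hU := h U (by simp)
    have ih' := ih (fun V hV => h V (by simp [hV]))
    rw [List.flatten_cons, List.length_append, Nat.count_add]
    have c1 : Nat.count (fun i => ((U ++ LL.flatten).take i).prod ∈ A) U.length = 1 := by
      obtain ⟨n, hn⟩ : ∃ n, U.length = n + 1 :=
        ⟨U.length - 1, by have := List.length_pos_iff.mpr hU.1; omega⟩
      rw [hn, Nat.count_succ']
      have : Nat.count (fun k => ((U ++ LL.flatten).take (k+1)).prod ∈ A) n = 0 := by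
        rw [Nat.count_iff_forall_not]
        intro k hk
        rw [List.take_append_of_le_length (by omega)]
        exact hU.2.2 _ (by omega) (by omega)
      rw [this]
      simp [A.one_mem]
    have c2 : (fun k => ((U ++ LL.flatten).take (U.length + k)).prod ∈ A)
        = (fun k => (LL.flatten.take k).prod ∈ A) := by
      funext k
      rw [List.take_length_add_append, List.prod_append]
      exact propext (A.mul_mem_cancel_left hU.2.1)
    rw [c1]
    simp only [c2]
    rw [ih', List.length_cons, add_comm]

theorem prefix_surj [Finite G] {S : Multiset G} (hS : IsPOAtom S) (hc : Multiset.card S = Nat.card G)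
    (l : List G) (h : (l : Multiset G) = S) (h1 : l.prod = 1) :
    Set.BijOn (fun i => (l.take i).prod) (Finset.range l.length : Set ℕ) Set.univ := by
  classical
  let := Fintype.ofFinite G
  have hl : l.length = Fintype.card G := by
    rw [← Nat.card_eq_fintype_card, ← hc, ← h]; simp
  have inj : Set.InjOn (fun i => (l.take i).prod) (Finset.range l.length : Set ℕ) := by
    intro i hi j hj heq
    simp only [Finset.coe_range, Set.mem_Iio] at hi hj
    rcases lt_trichotomy i j with h' | h' | h'
    · exact absurd heq (prefix_ne hS l h h1 i j h' hj)
    · exact h'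
    · exact absurd heq.symm (prefix_ne hS l h h1 j i h' hi)
  refine ⟨fun _ _ => trivial, inj, ?_⟩
  have : (Finset.range l.length).image (fun i => (l.take i).prod) = Finset.univ := by
    apply Finset.eq_univ_of_card
    rw [Finset.card_image_of_injOn inj, Finset.card_range, hl]
  intro g _
  have hg : g ∈ (Finset.range l.length).image (fun i => (l.take i).prod) := by
    rw [this]; exact Finset.mem_univ _
  simpa using hg

theorem card_of_prim [Finite G] {S : Multiset G} (hS : IsPOAtom S)
    (hc : Multiset.card S = Nat.card G) (A : Subgroup G)
    (LL : List (List G)) (h : ∀ U ∈ LL, PrimL A U) (h2 : (LL.flatten : Multiset G) = S)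
    (h1 : LL.flatten.prod = 1) : LL.length = Nat.card A := by
  classical
  let := Fintype.ofFinite G
  have hb := prefix_surj hS hc _ h2 h1
  rw [← count_flatten A LL h, Nat.count_eq_card_filter_range]
  have : ((Finset.range LL.flatten.length).filter
      (fun i => (LL.flatten.take i).prod ∈ A)).image (fun i => (LL.flatten.take i).prod)
      = Finset.univ.filter (fun g => g ∈ A) := by
    ext g
    simp only [Finset.mem_image, Finset.mem_filter, Finset.mem_univ, true_and]
    constructor
    · rintro ⟨i, ⟨_, hi⟩, rfl⟩; exact hi
    · intro hg
      obtain ⟨i, hi, rfl⟩ := hb.surjOn (Set.mem_univ g)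
      exact ⟨i, ⟨by simpa using hi, hg⟩, rfl⟩
  rw [← Finset.card_image_of_injOn (f := fun i => (LL.flatten.take i).prod), this]
  · rw [← Fintype.card_subtype, ← Nat.card_eq_fintype_card]
  · refine hb.injOn.mono ?_
    intro i hi
    simp only [Finset.coe_filter, Set.mem_ofPred_eq] at hi
    simpa using hi.1

theorem first_chunk (A : Subgroup G) (rest : List G) : ∀ v : List G, v ≠ [] →
    (∀ i, 0 < i → i ≤ v.length → (v.take i).prod ∉ A) → (v ++ rest).prod ∈ A →
    ∃ w rest', rest = w ++ rest' ∧ PrimL A (v ++ w) := by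
  induction rest with
  | nil =>
    intro v hv h1 h2
    exfalso
    refine h1 v.length (List.length_pos_iff.mpr hv) le_rfl ?_
    simpa using h2
  | cons z t ih =>
    intro v hv h1 h2
    by_cases hz : (v ++ [z]).prod ∈ A
    · refine ⟨[z], t, rfl, by simp, hz, ?_⟩
      intro i hi hi'
      simp at hi'
      rw [List.take_append_of_le_length (by omega)]
      exact h1 i hi (by omega)
    · obtain ⟨w, r, hw, hp⟩ := ih (v ++ [z]) (by simp) (by
        intro i hi hi'
        simp at hi'
        rcases Nat.lt_or_ge v.length i with h | h
        · rw [List.take_of_length_le (by simp; omega)]; exact hz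
        · rw [List.take_append_of_le_length h]; exact h1 i hi h) (by simpa using h2)
      exact ⟨z :: w, r, by simp [hw], by simpa using hp⟩

theorem exists_refine (A : Subgroup G) : ∀ n (l : List G), l.length ≤ n → l.prod ∈ A →
    ∃ LL : List (List G), LL.flatten = l ∧ ∀ U ∈ LL, PrimL A U := by
  intro n
  induction n with
  | zero =>
    intro l hl _
    have : l = [] := List.length_eq_zero_iff.mp (by omega)
    exact ⟨[], by simp [this], by simp⟩
  | succ n ih =>
    intro l hl hp
    match l, hl, hp with
    | [], _, _ => exact ⟨[], by simp, by simp⟩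
    | y :: t, hl, hp =>
      have : ∃ U r, y :: t = U ++ r ∧ PrimL A U := by
        by_cases hy : y ∈ A
        · refine ⟨[y], t, rfl, by simp, by simpa using hy, ?_⟩
          intro i hi hi'; simp at hi'; omega
        · obtain ⟨w, r, hw, hpr⟩ := first_chunk A t [y] (by simp) (by
            intro i hi hi'
            simp at hi'
            rw [List.take_of_length_le (by simp; omega)]
            simpa using hy) (by simpa using hp)
          exact ⟨[y] ++ w, r, by simp [hw], hpr⟩
      obtain ⟨U, r, hU, hpr⟩ := this
      have hl2 : (y :: t).length = U.length + r.length := by rw [hU]; simp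
      have := List.length_pos_iff.mpr hpr.1
      rw [hU, List.prod_append] at hp
      obtain ⟨LL, h1, h2⟩ := ih r (by omega) ((A.mul_mem_cancel_left hpr.2.1).mp hp)
      exact ⟨U :: LL, by simp [h1, hU], by
        intro V hV
        rcases List.mem_cons.mp hV with rfl | hV
        · exact hpr
        · exact h2 V hV⟩

/-- inheritance by subgroups -/
def HasFull (G : Type*) [Group G] : Prop := ∃ S : Multiset G, IsPOAtom S ∧ Multiset.card S = Nat.card G

theorem HasFull.subgroup [Finite G] (h : HasFull G) (K : Subgroup G) : HasFull K := by
  classical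
  obtain ⟨S, hS, hc⟩ := h
  obtain ⟨l, hl, hp⟩ := hS.1
  obtain ⟨LL, hLL, hprim⟩ := exists_refine K l.length l le_rfl (by rw [hp]; exact K.one_mem)
  have hcard := card_of_prim hS hc K LL hprim (by rw [hLL, hl]) (by rw [hLL, hp])
  let f : List G → K := fun U => if h : U.prod ∈ K then ⟨U.prod, h⟩ else 1
  have hf : ∀ L : List (List G), (∀ U ∈ L, PrimL K U) →
      ((L.map f).prod : G) = L.flatten.prod := by
    intro L
    induction L with
    | nil => simp
    | cons U L ih =>
      intro h
      have h1 : U.prod ∈ K := (h U (by simp)).2.1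
      rw [List.map_cons, List.prod_cons, List.flatten_cons, List.prod_append, Subgroup.coe_mul,
        ih (fun V hV => h V (by simp [hV]))]
      simp [f, h1]
  have hpos : 0 < LL.length := by rw [hcard]; exact Nat.card_pos
  refine ⟨((LL.map f : List K) : Multiset K), ⟨⟨_, rfl, ?_⟩, ?_, ?_⟩, ?_⟩
  · apply Subtype.ext
    rw [hf LL hprim, hLL, hp]; rfl
  · intro h0
    have : LL.length = 0 := by simpa using congrArg Multiset.card h0
    omega
  · rintro T₁ T₂ ⟨l₁, rfl, h1⟩ ⟨l₂, rfl, h2⟩ hT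
    have hT' : Multiset.map f (LL : Multiset (List G)) = (l₁ : Multiset K) + (l₂ : Multiset K) := by
      rw [hT]; simp
    obtain ⟨M₁, M₂, hM, hm1, hm2⟩ := map_add_split f _ _ _ hT'
    -- lift orders
    have lift : ∀ (M : Multiset (List G)) (l : List K), M.map f = l →
        ∃ L : List (List G), (L : Multiset (List G)) = M ∧ L.map f = l := by
      intro M l
      induction l generalizing M with
      | nil => 
        intro h
        have hM0 : M = 0 := by simpa using h
        exact ⟨[], by rw [hM0]; rfl, rfl⟩
      | cons a l ih =>
        intro h
        have : a ∈ M.map f := by rw [h]; simp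
        obtain ⟨U, hU, rfl⟩ := Multiset.mem_map.mp this
        obtain ⟨M', rfl⟩ := Multiset.exists_cons_of_mem hU
        obtain ⟨L, hL1, hL2⟩ := ih M' (by
          rw [Multiset.map_cons, ← Multiset.cons_coe] at h
          exact (Multiset.cons_inj_right _).mp h)
        exact ⟨U :: L, by rw [← hL1]; rfl, by simp [hL2]⟩
    obtain ⟨L₁, hL1, hl1⟩ := lift M₁ l₁ hm1
    obtain ⟨L₂, hL2, hl2⟩ := lift M₂ l₂ hm2
    have hperm : LL.Perm (L₁ ++ L₂) := by
      rw [← Multiset.coe_eq_coe, hM, ← hL1, ← hL2]; simp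
    have hp1 : ∀ U ∈ L₁, PrimL K U := fun U hU => hprim U (hperm.mem_iff.mpr (by simp [hU]))
    have hp2 : ∀ U ∈ L₂, PrimL K U := fun U hU => hprim U (hperm.mem_iff.mpr (by simp [hU]))
    have e := atom_split hS L₁.flatten L₂.flatten (by
      rw [← hl, ← hLL, ← List.flatten_append]
      exact Multiset.coe_eq_coe.mpr hperm.symm.flatten) (by
      rw [← hf L₁ hp1, hl1, h1]; rfl) (by rw [← hf L₂ hp2, hl2, h2]; rfl)
    have emp : ∀ L : List (List G), (∀ U ∈ L, PrimL K U) → L.flatten = [] → L = [] := by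
      intro L hL h0
      cases L with
      | nil => rfl
      | cons U L =>
        rw [List.flatten_cons, List.append_eq_nil_iff] at h0
        exact absurd h0.1 (hL U (by simp)).1
    rcases e with e | e
    · left; rw [← hl1, emp L₁ hp1 e]; rfl
    · right; rw [← hl2, emp L₂ hp2 e]; rfl
  · simpa using hcard

end Davenport

section Davenport2

open scoped IsMulCommutative

variable {G : Type*} [Group G]

open Classical in
/-- product of a list, seen in `A` -/
noncomputable def pA (A : Subgroup G) (U : List G) : A :=
  if h : U.prod ∈ A then ⟨U.prod, h⟩ else 1

theorem pA_coe {A : Subgroup G} {U : List G} (h : U.prod ∈ A) : (pA A U : G) = U.prod := by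
  simp [pA, h]

theorem pA_eq {A : Subgroup G} {U : List G} {a : A} (h : U.prod = a) : pA A U = a := by
  have h' : U.prod ∈ A := by rw [h]; exact a.2
  exact Subtype.ext (by rw [pA_coe h', h])

theorem pA_flatten {A : Subgroup G} (LL : List (List G)) (h : ∀ U ∈ LL, U.prod ∈ A) :
    (((LL.map (pA A)).prod : A) : G) = LL.flatten.prod := by
  induction LL with
  | nil => simp
  | cons U L ih =>
    rw [List.map_cons, List.prod_cons, List.flatten_cons, List.prod_append, Subgroup.coe_mul,
      ih (fun V hV => h V (by simp [hV])), pA_coe (h U (by simp))]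

theorem coe_flatten_sum (LL : List (List G)) :
    ((LL.map (fun U : List G => (U : Multiset G))).sum) = (LL.flatten : Multiset G) := by
  induction LL with
  | nil => rfl
  | cons U L ih => rw [List.map_cons, List.sum_cons, ih, List.flatten_cons]; rfl

/-- flattening of a multiset of lists -/
def msum (M : Multiset (List G)) : Multiset G := (M.map (fun U : List G => (U : Multiset G))).sum

theorem msum_add (M N : Multiset (List G)) : msum (M + N) = msum M + msum N := by simp [msum]
theorem msum_cons (U : List G) (N : Multiset (List G)) :
    msum (U ::ₘ N) = (U : Multiset G) + msum N := by simp [msum]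
@[simp] theorem msum_zero : msum (0 : Multiset (List G)) = 0 := by simp [msum]
theorem msum_replicate_single (k : ℕ) (g : G) :
    msum (Multiset.replicate k [g]) = Multiset.replicate k g := by
  induction k with
  | zero => simp
  | succ k ih => rw [Multiset.replicate_succ, msum_cons, ih, Multiset.replicate_succ]; rfl

structure IsCfg (A : Subgroup G) [IsMulCommutative A] (S : Multiset G) (M : Multiset (List G)) : Prop where
  mem : ∀ U ∈ M, U ≠ [] ∧ U.prod ∈ A
  sum : msum M = S
  prod : (M.map (pA A)).prod = 1

variable {S : Multiset G} {A : Subgroup G} [IsMulCommutative A] {M : Multiset (List G)}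

theorem msum_coe (LL : List (List G)) : msum (LL : Multiset (List G)) = (LL.flatten : Multiset G) := by
  rw [msum, Multiset.map_coe, Multiset.sum_coe, coe_flatten_sum]

theorem mprod_coe (LL : List (List G)) (h : ∀ U ∈ LL, U.prod ∈ A) :
    (((Multiset.map (pA A) (LL : Multiset (List G))).prod : A) : G) = LL.flatten.prod := by
  rw [Multiset.map_coe, Multiset.prod_coe, pA_flatten LL h]

theorem IsCfg.split (hS : IsPOAtom S) (hM : IsCfg A S M) (s : Multiset (List G)) (hs : s ≤ M)
    (h1 : (s.map (pA A)).prod = 1) : s = 0 ∨ s = M := by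
  obtain ⟨t, rfl⟩ := Multiset.le_iff_exists_add.mp hs
  have h2 : (t.map (pA A)).prod = 1 := by
    have := hM.prod
    rwa [Multiset.map_add, Multiset.prod_add, h1, one_mul] at this
  obtain ⟨L, rfl⟩ := Quot.exists_rep s
  obtain ⟨L', rfl⟩ := Quot.exists_rep t
  change ((L : Multiset (List G)) = 0 ∨ (L : Multiset (List G)) = (L : Multiset (List G)) + (L' : Multiset (List G)))
  have hm1 : ∀ U ∈ L, U ≠ [] ∧ U.prod ∈ A := fun U hU => hM.mem U (Multiset.mem_add.mpr (Or.inl hU))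
  have hm2 : ∀ U ∈ L', U ≠ [] ∧ U.prod ∈ A := fun U hU => hM.mem U (Multiset.mem_add.mpr (Or.inr hU))
  have e1 := mprod_coe L (fun U hU => (hm1 U hU).2)
  have e2 := mprod_coe L' (fun U hU => (hm2 U hU).2)
  have emp : ∀ L : List (List G), (∀ U ∈ L, U ≠ [] ∧ U.prod ∈ A) → L.flatten = [] → L = [] := by
    intro L hL h0
    cases L with
    | nil => rfl
    | cons U L =>
      rw [List.flatten_cons, List.append_eq_nil_iff] at h0
      exact absurd h0.1 (hL U (by simp)).1
  have := atom_split hS L.flatten L'.flatten (by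
    rw [← Multiset.coe_add, ← msum_coe, ← msum_coe, ← msum_add]; exact hM.sum)
    (by rw [← e1]; exact congrArg Subtype.val h1) (by rw [← e2]; exact congrArg Subtype.val h2)
  rcases this with h | h
  · left; rw [emp L hm1 h]; rfl
  · right; rw [emp L' hm2 h]; simp

theorem IsCfg.const [Finite G] (hS : IsPOAtom S) (hM : IsCfg A S M)
    (hcard : Multiset.card M = Nat.card A) : ∀ U ∈ M, ∀ V ∈ M, pA A U = pA A V := by
  have := zero_sum_const (M.map (pA A)) (by rw [Multiset.card_map, hcard]; omega) (by
    intro s hs h0 hlt h1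
    obtain ⟨M', hM', rfl⟩ := exists_le_of_le_map _ _ _ hs
    rcases hM.split hS M' hM' h1 with h | h
    · exact h0 (by rw [h]; simp)
    · rw [Multiset.card_map, h, hcard] at hlt; omega)
  intro U hU V hV
  exact this _ (Multiset.mem_map_of_mem _ hU) _ (Multiset.mem_map_of_mem _ hV)

theorem IsCfg.card_prim [Finite G] (hS : IsPOAtom S) (hc : Multiset.card S = Nat.card G)
    (hM : IsCfg A S M) (hp : ∀ U ∈ M, PrimL A U) : Multiset.card M = Nat.card A := by
  obtain ⟨L, rfl⟩ := Quot.exists_rep M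
  have := card_of_prim hS hc A L (fun U hU => hp U hU) (by rw [← msum_coe]; exact hM.sum) (by
    rw [← mprod_coe (A := A) L (fun U hU => (hp U hU).2.1)]; exact congrArg Subtype.val hM.prod)
  exact this

theorem IsCfg.refine [Finite G] (hM : IsCfg A S M) : ∃ M', IsCfg A S M' ∧ (∀ U ∈ M', PrimL A U) ∧
    ∀ U ∈ M, PrimL A U → U ∈ M' := by
  classical
  have key : ∀ M : Multiset (List G), (∀ U ∈ M, U.prod ∈ A) → ∃ M' : Multiset (List G),
      msum M' = msum M ∧ (M'.map (pA A)).prod = (M.map (pA A)).prod ∧ (∀ U ∈ M', PrimL A U) ∧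
      ∀ U ∈ M, PrimL A U → U ∈ M' := by
    intro M
    induction M using Multiset.induction_on with
    | empty => intro _; exact ⟨0, by simp⟩
    | cons U M ih =>
      intro h
      obtain ⟨M', h1, h2, h3, h4⟩ := ih (fun V hV => h V (by simp [hV]))
      by_cases hU : PrimL A U
      · refine ⟨U ::ₘ M', by simp [msum_cons, h1], by simp [h2], ?_, ?_⟩
        · intro V hV
          rcases Multiset.mem_cons.mp hV with rfl | hV
          · exact hU
          · exact h3 V hV
        · intro V hV hp
          rcases Multiset.mem_cons.mp hV with rfl | hV
          · simp
          · simp [h4 V hV hp]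
      · obtain ⟨LL, hl, hp⟩ := exists_refine A U.length U le_rfl (h U (by simp))
        refine ⟨(LL : Multiset (List G)) + M', ?_, ?_, ?_, ?_⟩
        · rw [msum_add, msum_coe, hl, h1, msum_cons]
        · rw [Multiset.map_add, Multiset.prod_add, h2, Multiset.map_cons, Multiset.prod_cons]
          congr 1
          apply Subtype.ext
          rw [mprod_coe LL (fun V hV => (hp V hV).2.1), hl, pA_coe (h U (by simp))]
        · intro V hV
          rcases Multiset.mem_add.mp hV with hV | hV
          · exact hp V hV
          · exact h3 V hV
        · intro V hV hp
          rcases Multiset.mem_cons.mp hV with rfl | hV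
          · exact absurd hp hU
          · exact Multiset.mem_add.mpr (Or.inr (h4 V hV hp))
  obtain ⟨M', h1, h2, h3, h4⟩ := key M (fun U hU => (hM.mem U hU).2)
  exact ⟨M', ⟨fun U hU => ⟨(h3 U hU).1, (h3 U hU).2.1⟩, h1.trans hM.sum, h2.trans hM.prod⟩, h3, h4⟩

theorem IsCfg.prim_eq [Finite G] (hS : IsPOAtom S) (hc : Multiset.card S = Nat.card G)
    (hM : IsCfg A S M) (U V : List G) (hU : U ∈ M) (hV : V ∈ M) (pU : PrimL A U) (pV : PrimL A V) :
    pA A U = pA A V := by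
  obtain ⟨M', h1, h2, h3⟩ := hM.refine
  exact h1.const hS (h1.card_prim hS hc h2) U (h3 U hU pU) V (h3 V hV pV)

/-- A commutative group having a full atom is cyclic. -/
theorem cyclic_of_comm [Finite G] (hcomm : ∀ x y : G, x * y = y * x) (h : HasFull G) : IsCyclic G := by
  obtain ⟨S, hS, hc⟩ := h
  let A : Subgroup G := ⊤
  have : IsMulCommutative A := ⟨⟨fun x y => Subtype.ext (hcomm _ _)⟩⟩
  obtain ⟨l, hl, hp⟩ := hS.1
  have hfl : (l.map (fun g => [g])).flatten = l := by
    clear hl hp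
    induction l with
    | nil => rfl
    | cons a l ih => rw [List.map_cons, List.flatten_cons, ih]; rfl
  have hM : IsCfg A S ((l.map (fun g => [g]) : List (List G)) : Multiset (List G)) := by
    refine ⟨?_, ?_, ?_⟩
    · intro U hU
      obtain ⟨g, hg, rfl⟩ := List.mem_map.mp (Multiset.mem_coe.mp hU)
      exact ⟨by simp, Subgroup.mem_top _⟩
    · rw [msum_coe, hfl, hl]
    · apply Subtype.ext
      rw [mprod_coe _ (fun U hU => Subgroup.mem_top _), hfl, hp]; rfl
  have hll : l.length = Nat.card G := by rw [← hc, ← hl]; rfl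
  have hconst := hM.const hS (by simp [A, hll])
  have hpos : 0 < l.length := by rw [hll]; exact Nat.card_pos
  obtain ⟨c, hcl⟩ : ∃ c, c ∈ l := List.exists_mem_of_length_pos hpos
  have hall : ∀ g ∈ l, g = c := by
    intro g hg
    have := hconst [g] (by simpa using hg) [c] (by simpa using hcl)
    have := congrArg Subtype.val this
    rwa [pA_coe (Subgroup.mem_top _), pA_coe (Subgroup.mem_top _), List.prod_singleton, List.prod_singleton] at this
  have hrep : l = List.replicate (Nat.card G) c := List.eq_replicate_iff.mpr ⟨hll, hall⟩
  apply isCyclic_of_orderOf_eq_card c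
  rcases Nat.lt_or_ge (orderOf c) (Nat.card G) with h | h
  · exfalso
    have := atom_split hS (List.replicate (orderOf c) c) (List.replicate (Nat.card G - orderOf c) c) (by
      rw [← List.replicate_add, Nat.add_sub_cancel' h.le, ← hrep, hl]) (by simp [pow_orderOf_eq_one]) (by
      rw [List.prod_replicate, ← mul_right_inj (c ^ orderOf c), ← pow_add, Nat.add_sub_cancel' h.le]
      rw [pow_orderOf_eq_one, pow_card_eq_one', mul_one])
    have h0 := orderOf_pos c
    rcases this with h | h <;> have := congrArg List.length h <;> simp at this
    · exact absurd this (not_not.mpr (isOfFinOrder_of_finite c))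
    · omega
  · exact le_antisymm (Nat.le_of_dvd Nat.card_pos (orderOf_dvd_natCard c)) h

end Davenport2

section Davenport3

theorem mexists_le_card {α : Type*} (M : Multiset α) (n : ℕ) (h : n ≤ Multiset.card M) :
    ∃ s ≤ M, Multiset.card s = n := by
  induction M using Quotient.inductionOn with
  | h l =>
    exact ⟨(l.take n : List α), Multiset.coe_le.mpr (List.take_sublist n l).subperm, by
      simpa using h⟩

open scoped IsMulCommutative

variable {G : Type*} [Group G]

theorem flatten_prefix {A : Subgroup G} [A.Normal] (LL : List (List G)) (h : ∀ U ∈ LL, U.prod ∈ A) :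
    ∀ i < LL.flatten.length, ∃ U ∈ LL, ∃ j < U.length,
      (U.take j).prod⁻¹ * (LL.flatten.take i).prod ∈ A := by
  induction LL with
  | nil => intro i hi; simp at hi
  | cons U L ih =>
    intro i hi
    rw [List.flatten_cons, List.length_append] at hi
    rcases Nat.lt_or_ge i U.length with h1 | h1
    · refine ⟨U, by simp, i, h1, ?_⟩
      rw [List.flatten_cons, List.take_append_of_le_length h1.le, inv_mul_cancel]
      exact A.one_mem
    · obtain ⟨t, rfl⟩ := Nat.exists_eq_add_of_le h1
      obtain ⟨V, hV, j, hj, hm⟩ := ih (fun V hV => h V (by simp [hV])) t (by omega)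
      refine ⟨V, by simp [hV], j, hj, ?_⟩
      rw [List.flatten_cons, List.take_length_add_append, List.prod_append]
      have h2 := ‹A.Normal›.conj_mem _ (h U (by simp)) (V.take j).prod⁻¹
      have := A.mul_mem h2 hm
      convert this using 1
      group

variable {S : Multiset G} {A : Subgroup G} [A.Normal] [IsMulCommutative A]

/-- conjugation commutator -/
def dd (c : A) (g : G) : A := MulAut.conjNormal g c * c⁻¹

structure Base (S : Multiset G) (c : A) (k : ℕ) (N : Multiset (List G)) : Prop where
  prim : ∀ U ∈ N, PrimL A U
  len : ∀ U ∈ N, 2 ≤ U.length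
  pa : ∀ U ∈ N, pA A U = c
  sum : Multiset.replicate k (c : G) + msum N = S
  card : k + Multiset.card N = Nat.card A
  visit : ∀ g, g ∉ A → ∃ U ∈ N, ∃ i, 0 < i ∧ i < U.length ∧ (U.take i).prod⁻¹ * g ∈ A
  gen : orderOf c = Nat.card A
  self : ∀ g, MulAut.conjNormal g c = c → g ∈ A

theorem gen_zpow [Finite G] {c : A} (h : orderOf c = Nat.card A) (a : A) : ∃ n : ℤ, c ^ n = a := by
  have : Subgroup.zpowers c = ⊤ := by
    apply Subgroup.eq_top_of_card_eq
    rw [Nat.card_zpowers, h]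
  have h2 : a ∈ Subgroup.zpowers c := by rw [this]; trivial
  exact Subgroup.mem_zpowers_iff.mp h2

theorem prim_one {U : List G} (hU : PrimL A U) (h : ¬ 2 ≤ U.length) (c : A) (hc : pA A U = c) :
    U = [(c : G)] := by
  have := List.length_pos_iff.mpr hU.1
  obtain ⟨g, rfl⟩ := List.length_eq_one_iff.mp (show U.length = 1 by omega)
  have h2 := pA_coe hU.2.1
  rw [hc, List.prod_singleton] at h2
  rw [h2]

theorem exists_base [Finite G] (hS : IsPOAtom S) (hc : Multiset.card S = Nat.card G)
    (hself : ∀ g, (∀ a ∈ A, g * a = a * g) → g ∈ A)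
    (LL : List (List G)) (h : ∀ U ∈ LL, PrimL A U) (h2 : (LL.flatten : Multiset G) = S)
    (h1 : LL.flatten.prod = 1) : ∃ c : A, ∃ k N, Base S c k N ∧ ∀ U ∈ LL, 2 ≤ U.length → U ∈ N := by
  classical
  have hcfg : IsCfg A S (LL : Multiset (List G)) := by
    refine ⟨fun U hU => ⟨(h U hU).1, (h U hU).2.1⟩, by rw [msum_coe, h2], ?_⟩
    apply Subtype.ext
    rw [mprod_coe LL (fun U hU => (h U hU).2.1), h1]; rfl
  have hcard : LL.length = Nat.card A := hcfg.card_prim hS hc h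
  have hconst := hcfg.const hS hcard
  have hpos : 0 < LL.length := by rw [hcard]; exact Nat.card_pos
  obtain ⟨U0, hU0⟩ : ∃ U, U ∈ LL := List.exists_mem_of_length_pos hpos
  set c := pA A U0 with hcdef
  have hall : ∀ U ∈ LL, pA A U = c := fun U hU => hconst U hU U0 hU0
  set M : Multiset (List G) := (LL : Multiset (List G)) with hMdef
  have hMcard : Multiset.card M = Nat.card A := hcard
  set N := M.filter (fun U => 2 ≤ U.length) with hN
  set T := M.filter (fun U => ¬ 2 ≤ U.length) with hT
  have hNT : N + T = M := Multiset.filter_add_not _ _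
  have hTr : T = Multiset.replicate (Multiset.card T) [(c : G)] := by
    rw [Multiset.eq_replicate]
    refine ⟨rfl, ?_⟩
    intro U hU
    rw [hT, Multiset.mem_filter] at hU
    exact prim_one (h U hU.1) hU.2 c (hall U hU.1)
  have hgen : orderOf c = Nat.card A := by
    rcases Nat.lt_or_ge (orderOf c) (Nat.card A) with h' | h'
    · exfalso
      obtain ⟨s, hs, hsc⟩ := mexists_le_card M (orderOf c) (by omega)
      have hmap : s.map (pA A) = Multiset.replicate (orderOf c) c := by
        rw [Multiset.eq_replicate]
        refine ⟨by simp [hsc], ?_⟩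
        intro b hb
        obtain ⟨U, hU, rfl⟩ := Multiset.mem_map.mp hb
        exact hall U (Multiset.mem_of_le hs hU)
      have h0 := orderOf_pos c
      rcases hcfg.split hS s hs (by rw [hmap, Multiset.prod_replicate, pow_orderOf_eq_one]) with h | h
      · rw [h, Multiset.card_zero] at hsc; omega
      · rw [h] at hsc; omega
    · exact le_antisymm (Nat.le_of_dvd Nat.card_pos (orderOf_dvd_natCard c)) h'
  refine ⟨c, Multiset.card T, N, ⟨?_, ?_, ?_, ?_, ?_, ?_, hgen, ?_⟩, ?_⟩
  · intro U hU
    rw [hN, Multiset.mem_filter] at hU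
    exact h U hU.1
  · intro U hU
    rw [hN, Multiset.mem_filter] at hU
    exact hU.2
  · intro U hU
    rw [hN, Multiset.mem_filter] at hU
    exact hall U hU.1
  · rw [← msum_replicate_single, ← hTr, ← msum_add, add_comm, hNT]; exact hcfg.sum
  · rw [← hMcard, ← hNT, Multiset.card_add, add_comm]
  · intro g hg
    obtain ⟨i, hi, hig⟩ := (prefix_surj hS hc _ h2 h1).surjOn (Set.mem_univ g)
    obtain ⟨U, hU, j, hj, hm⟩ := flatten_prefix (A := A) LL (fun U hU => (h U hU).2.1) i (by simpa using hi)
    simp only at hig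
    rw [hig] at hm
    have hj0 : 0 < j := by
      rcases Nat.eq_zero_or_pos j with rfl | h0
      · simp at hm; exact absurd hm hg
      · exact h0
    refine ⟨U, ?_, j, hj0, hj, hm⟩
    rw [hN, Multiset.mem_filter]
    exact ⟨hU, by omega⟩
  · intro g hg
    apply hself
    intro a ha
    obtain ⟨n, hn⟩ := gen_zpow hgen ⟨a, ha⟩
    have : MulAut.conjNormal g (⟨a, ha⟩ : A) = ⟨a, ha⟩ := by
      rw [← hn, map_zpow, hg]
    have := congrArg Subtype.val this
    rw [MulAut.conjNormal_apply] at this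
    simp only at this
    exact mul_inv_eq_iff_eq_mul.mp this
  · intro U hU h'
    rw [hN, Multiset.mem_filter]
    exact ⟨hU, h'⟩

theorem conj_congr (c : A) {g h : G} (hgh : g⁻¹ * h ∈ A) :
    MulAut.conjNormal g c = MulAut.conjNormal h c := by
  apply Subtype.ext
  rw [MulAut.conjNormal_apply, MulAut.conjNormal_apply]
  have := congrArg Subtype.val (mul_comm (⟨g⁻¹ * h, hgh⟩ : A) c)
  simp only [Subgroup.coe_mul] at this
  have h2 : h = g * (g⁻¹ * h) := by group
  calc g * c * g⁻¹ = g * (c * (g⁻¹ * h)) * (g⁻¹ * h)⁻¹ * g⁻¹ := by group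
    _ = g * (g⁻¹ * h * c) * (g⁻¹ * h)⁻¹ * g⁻¹ := by rw [this]
    _ = h * c * h⁻¹ := by group

theorem Base.conj_inj {c : A} {k N} (hB : Base S c k N) {g h : G}
    (hgh : MulAut.conjNormal g c = MulAut.conjNormal h c) : g⁻¹ * h ∈ A := by
  apply hB.self
  rw [map_mul, MulAut.mul_apply, ← hgh, ← MulAut.mul_apply, ← map_mul, inv_mul_cancel, map_one,
    MulAut.one_apply]

theorem dd_congr (c : A) {g h : G} (hgh : g⁻¹ * h ∈ A) : dd c g = dd c h := by
  rw [dd, dd, conj_congr c hgh]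

theorem Base.dd_inj {c : A} {k N} (hB : Base S c k N) {g h : G}
    (hgh : dd c g = dd c h) : g⁻¹ * h ∈ A := by
  apply hB.conj_inj
  simpa [dd] using hgh

theorem Base.dd_ne_one {c : A} {k N} (hB : Base S c k N) {g : G} (hg : g ∉ A) : dd c g ≠ 1 := by
  intro h
  apply hg
  apply hB.self
  simpa [dd, mul_inv_eq_one] using h

/-- insertion of `j` copies of `c` -/
theorem ins_prod (c : A) (U : List G) (i j : ℕ) :
    (U.take i ++ List.replicate j (c : G) ++ U.drop i).prod =
      ((MulAut.conjNormal (U.take i).prod c) ^ j : A) * U.prod := by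
  rw [Subgroup.coe_pow, MulAut.conjNormal_apply, conj_pow]
  conv_rhs => rw [← List.take_append_drop i U]
  simp only [List.prod_append, List.prod_replicate]
  rw [List.take_append_drop]
  group

theorem ins_prim (c : A) (U : List G) (hU : PrimL A U) (i j : ℕ) (hi : 0 < i) (hi' : i < U.length) :
    PrimL A (U.take i ++ List.replicate j (c : G) ++ U.drop i) := by
  refine ⟨?_, ?_, ?_⟩
  · intro h0
    have := congrArg List.length h0
    simp at this
    omega
  · rw [ins_prod]; exact A.mul_mem (Subtype.mem _) hU.2.1
  · intro t ht ht'
    have hlen : (U.take i).length = i := by simp; omega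
    simp only [List.length_append, List.length_replicate, hlen, List.length_drop] at ht'
    rcases Nat.lt_or_ge (i + j) t with h | h
    · -- beyond
      obtain ⟨s, rfl⟩ := Nat.exists_eq_add_of_le h.le
      have e : (U.take i ++ List.replicate j (c : G) ++ U.drop i).take (i + j + s)
          = (U.take (i+s)).take i ++ List.replicate j (c : G) ++ (U.take (i+s)).drop i := by
        have : i + j + s = (U.take i ++ List.replicate j (c : G)).length + s := by simp; omega
        rw [this, List.take_length_add_append, List.take_take, min_eq_left (by omega), List.drop_take]
        congr 2; omega
      rw [e, ins_prod]
      intro hm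
      rw [A.mul_mem_cancel_left (Subtype.mem _)] at hm
      exact hU.2.2 _ (by omega) (by omega) hm
    · rw [List.take_append_of_le_length (by simp; omega)]
      rcases Nat.lt_or_ge i t with h3 | h3
      · obtain ⟨s, rfl⟩ := Nat.exists_eq_add_of_le h3.le
        have : (U.take i ++ List.replicate j (c : G)).take (i + s) = U.take i ++ List.replicate s (c : G) := by
          have : i + s = (U.take i).length + s := by rw [hlen]
          rw [this, List.take_length_add_append, List.take_replicate, min_eq_left (by omega)]
        rw [this, List.prod_append, List.prod_replicate, A.mul_mem_cancel_right (A.pow_mem c.2 _)]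
        exact hU.2.2 i hi hi'
      · rw [List.take_append_of_le_length (by omega), List.take_take, min_eq_left h3]
        exact hU.2.2 t ht (by omega)

theorem ins_coe (c : A) (U : List G) (i j : ℕ) :
    ((U.take i ++ List.replicate j (c : G) ++ U.drop i : List G) : Multiset G)
      = Multiset.replicate j (c : G) + (U : Multiset G) := by
  conv_rhs => rw [← List.take_append_drop i U]
  simp only [← Multiset.coe_add, Multiset.coe_replicate]
  abel

end Davenport3

section Davenport4

open scoped IsMulCommutative

variable {G : Type*} [Group G] {S : Multiset G} {A : Subgroup G} [A.Normal] [IsMulCommutative A]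

theorem prod_c (c : A) (N : Multiset (List G)) (h : ∀ U ∈ N, pA A U = c) :
    (N.map (pA A)).prod = c ^ Multiset.card N := by
  have e : N.map (pA A) = Multiset.replicate (Multiset.card N) c := by
    rw [Multiset.eq_replicate]
    refine ⟨by simp, ?_⟩
    intro b hb
    obtain ⟨U, hU, rfl⟩ := Multiset.mem_map.mp hb
    exact h U hU
  rw [e, Multiset.prod_replicate]

theorem single_prim (c : A) : PrimL A [(c : G)] := by
  refine ⟨by simp, by simp, ?_⟩
  intro i hi hi'; simp at hi'; omega

theorem single_pA (c : A) : pA A [(c : G)] = c := pA_eq (by simp)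

theorem insert_many (c : A) (Γ : List G) : ∀ (k : ℕ) (N : Multiset (List G)), 
    (∀ g ∈ Γ, g ∉ A) → (∀ U ∈ N, PrimL A U) → 
    (∀ g, g ∉ A → ∃ U ∈ N, ∃ i, 0 < i ∧ i < U.length ∧ (U.take i).prod⁻¹ * g ∈ A) →
    Multiset.replicate (k + Γ.length) (c : G) + msum N = S →
    ∃ N' : Multiset (List G), (∀ U ∈ N', PrimL A U) ∧ Multiset.replicate k (c : G) + msum N' = S ∧
      Multiset.card N' = Multiset.card N ∧
      (N'.map (pA A)).prod = (N.map (pA A)).prod * c ^ Γ.length * (Γ.map (dd c)).prod := by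
  induction Γ with
  | nil =>
    intro k N _ hp _ hs
    exact ⟨N, hp, by simpa using hs, rfl, by simp⟩
  | cons g Γ ih =>
    intro k N hΓ hp hv hs
    obtain ⟨U, hU, i, hi, hi', hg⟩ := hv g (hΓ g (by simp))
    obtain ⟨N₁, rfl⟩ := Multiset.exists_cons_of_mem hU
    have hpU := hp U hU
    set U' := U.take i ++ List.replicate 1 (c : G) ++ U.drop i with hU'
    have hpU' : PrimL A U' := ins_prim c U hpU i 1 hi hi'
    have hUlen : U'.length = U.length + 1 := by simp [hU']; omega
    have hpaU' : pA A U' = pA A U * c * dd c g := by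
      apply pA_eq
      rw [hU', ins_prod, pow_one, conj_congr c hg, ← pA_coe hpU.2.1, ← Subgroup.coe_mul]
      congr 1
      rw [dd]
      rw [mul_assoc, mul_comm _ c⁻¹, mul_inv_cancel_left, mul_comm]
    have htake : ∀ t, 0 < t → t < U.length → ∃ s, 0 < s ∧ s < U'.length ∧
        ∀ x, (U.take t).prod⁻¹ * x ∈ A → (U'.take s).prod⁻¹ * x ∈ A := by
      intro t ht ht'
      have hlen : (U.take i).length = i := by simp; omega
      rcases Nat.lt_or_ge i t with h | h
      · refine ⟨t + 1, by omega, by omega, ?_⟩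
        intro x hx
        have e : U'.take (t + 1) = (U.take t).take i ++ List.replicate 1 (c : G) ++ (U.take t).drop i := by
          have : t + 1 = (U.take i ++ List.replicate 1 (c : G)).length + (t - i) := by simp; omega
          rw [hU', this, List.take_length_add_append, List.take_take, min_eq_left (by omega), List.drop_take]
        rw [e, ins_prod, mul_inv_rev]
        set a := (MulAut.conjNormal ((U.take t).take i).prod c ^ 1 : A)
        have h2 := ‹A.Normal›.conj_mem _ (A.inv_mem a.2) (U.take t).prod⁻¹
        have := A.mul_mem h2 hx
        convert this using 1
        group
      · refine ⟨t, ht, by omega, ?_⟩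
        intro x hx
        rw [hU', List.append_assoc, List.take_append_of_le_length (by omega), List.take_take, min_eq_left h]
        exact hx
    obtain ⟨N', h1, h2, h3, h4⟩ := ih k (U' ::ₘ N₁) (fun g hg => hΓ g (by simp [hg])) (by
        intro V hV
        rcases Multiset.mem_cons.mp hV with rfl | hV
        · exact hpU'
        · exact hp V (by simp [hV])) (by
        intro x hx
        obtain ⟨V, hV, t, ht, ht', hm⟩ := hv x hx
        rcases Multiset.mem_cons.mp hV with rfl | hV
        · obtain ⟨s, hs, hs', hh⟩ := htake t ht ht'
          exact ⟨U', by simp, s, hs, hs', hh x hm⟩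
        · exact ⟨V, by simp [hV], t, ht, ht', hm⟩) (by
        rw [← hs, msum_cons, msum_cons, hU', ins_coe, List.length_cons, ← add_assoc k,
          Multiset.replicate_add (k + Γ.length) 1]
        abel)
    refine ⟨N', h1, h2, by simpa using h3, ?_⟩
    rw [h4]
    simp only [Multiset.map_cons, Multiset.prod_cons, List.map_cons, List.prod_cons, List.length_cons, hpaU', pow_succ]
    simp only [mul_assoc, mul_comm, mul_left_comm]

theorem Base.P1 [Finite G] (hS : IsPOAtom S) (hc : Multiset.card S = Nat.card G) {c : A} {k N}
    (hB : Base S c k N) (Γ : Multiset G) (hΓ : ∀ g ∈ Γ, g ∉ A) (hk : Multiset.card Γ ≤ k) (h0 : Γ ≠ 0) :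
    (Γ.map (dd c)).prod ≠ 1 := by
  intro h1
  induction Γ using Quotient.inductionOn with
  | h Γ =>
  simp only [Multiset.quot_mk_to_coe, Multiset.mem_coe, Multiset.coe_card, Multiset.map_coe, Multiset.prod_coe] at *
  obtain ⟨j, rfl⟩ := Nat.exists_eq_add_of_le' hk
  obtain ⟨N', h2, h3, h4, h5⟩ := insert_many c Γ j N hΓ hB.prim hB.visit hB.sum
  have hcfg : IsCfg A S (Multiset.replicate j [(c : G)] + N') := by
    refine ⟨?_, ?_, ?_⟩
    · intro U hU
      rcases Multiset.mem_add.mp hU with hU | hU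
      · rw [Multiset.eq_of_mem_replicate hU]; simp
      · exact ⟨(h2 U hU).1, (h2 U hU).2.1⟩
    · rw [msum_add, msum_replicate_single, h3]
    · rw [Multiset.map_add, Multiset.prod_add, h5, h1, mul_one, prod_c c N hB.pa, Multiset.map_replicate,
        Multiset.prod_replicate, single_pA, ← pow_add, ← pow_add]
      rw [show j + (Multiset.card N + Γ.length) = Nat.card A by rw [← hB.card]; ring]
      exact pow_card_eq_one'
  have := hcfg.card_prim hS hc (by
    intro U hU
    rcases Multiset.mem_add.mp hU with hU | hU
    · rw [Multiset.eq_of_mem_replicate hU]; exact single_prim c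
    · exact h2 U hU)
  rw [Multiset.card_add, Multiset.card_replicate, h4, ← hB.card] at this
  have h6 : Γ.length = 0 := by omega
  exact h0 (by simpa using h6)

/-- rotation contribution -/
def ee (c : A) (q : List G × ℕ) : A := dd c (q.1.take q.2).prod⁻¹

theorem rot_prod (c : A) (Y : List G) (i : ℕ) (h : Y.prod = c) (hi : i ≤ Y.length) :
    (Y.rotate i).prod = ((ee c (Y, i) * c : A) : G) := by
  rw [List.rotate_eq_drop_append_take hi, ee, dd, inv_mul_cancel_right, MulAut.conjNormal_apply, ← h]
  have e : Y.prod = (Y.take i).prod * (Y.drop i).prod := by rw [← List.prod_append, List.take_append_drop]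
  rw [e, List.prod_append]
  group

theorem rot_pA (c : A) (Y : List G) (i : ℕ) (h : Y.prod = c) (hi : i ≤ Y.length) :
    pA A (Y.rotate i) = ee c (Y, i) * c := pA_eq (rot_prod c Y i h hi)

theorem rot_coe (Y : List G) (i : ℕ) : ((Y.rotate i : List G) : Multiset G) = (Y : Multiset G) :=
  Multiset.coe_eq_coe.mpr (List.rotate_perm Y i)

theorem rot_msum (P : Multiset (List G × ℕ)) :
    msum (P.map (fun q => q.1.rotate q.2)) = msum (P.map Prod.fst) := by
  simp only [msum, Multiset.map_map, Function.comp_def, rot_coe]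

theorem rot_mprod (c : A) (P : Multiset (List G × ℕ)) (h : ∀ q ∈ P, q.1.prod = c ∧ q.2 ≤ q.1.length) :
    ((P.map (fun q => q.1.rotate q.2)).map (pA A)).prod = (P.map (ee c)).prod * c ^ Multiset.card P := by
  induction P using Multiset.induction_on with
  | empty => simp
  | cons q P ih =>
    have hq := h q (by simp)
    simp only [Multiset.map_cons, Multiset.prod_cons, Multiset.card_cons]
    rw [ih (fun q hq => h q (by simp [hq])), rot_pA c _ _ hq.1 hq.2, pow_succ, Prod.mk.eta]
    simp only [mul_assoc, mul_comm, mul_left_comm]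

variable [Finite G]

theorem Base.prefix_not_mem {c : A} {k N} (hB : Base S c k N) {U : List G} (hU : U ∈ N) {i : ℕ}
    (h : 0 < i ∧ i < U.length) : (U.take i).prod ∉ A := (hB.prim U hU).2.2 i h.1 h.2

theorem Base.prod_eq {c : A} {k N} (hB : Base S c k N) {U : List G} (hU : U ∈ N) : U.prod = c := by
  rw [← hB.pa U hU, pA_coe (hB.prim U hU).2.1]

theorem Base.P2 (hS : IsPOAtom S) {c : A} {k N} (hB : Base S c k N) (Q : Multiset (List G × ℕ))
    (hQ : Q.map Prod.fst = N) (hi : ∀ q ∈ Q, 0 < q.2 ∧ q.2 < q.1.length)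
    (Q₁ : Multiset (List G × ℕ)) (hle : Q₁ ≤ Q) (h0 : Q₁ ≠ 0) (hne : k ≠ 0 ∨ Q₁ ≠ Q) :
    (Q₁.map (ee c)).prod ≠ 1 := by
  intro h1
  obtain ⟨Q₂, rfl⟩ := Multiset.le_iff_exists_add.mp hle
  have hmemN : ∀ q ∈ Q₁ + Q₂, q.1 ∈ N := fun q hq => by rw [← hQ]; exact Multiset.mem_map_of_mem _ hq
  have hcardN : Multiset.card N = Multiset.card Q₁ + Multiset.card Q₂ := by rw [← hQ]; simp
  have hp1 : ∀ q ∈ Q₁, q.1.prod = c ∧ q.2 ≤ q.1.length := fun q hq => 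
    have hq' : q ∈ Q₁ + Q₂ := Multiset.mem_add.mpr (Or.inl hq)
    ⟨hB.prod_eq (hmemN q hq'), (hi q hq').2.le⟩
  have hcfg : IsCfg A S (Multiset.replicate k [(c : G)] + Q₁.map (fun q => q.1.rotate q.2) + Q₂.map Prod.fst) := by
    refine ⟨?_, ?_, ?_⟩
    · intro U hU
      rcases Multiset.mem_add.mp hU with hU | hU
      · rcases Multiset.mem_add.mp hU with hU | hU
        · rw [Multiset.eq_of_mem_replicate hU]; simp
        · obtain ⟨q, hq, rfl⟩ := Multiset.mem_map.mp hU
          have hq' : q ∈ Q₁ + Q₂ := Multiset.mem_add.mpr (Or.inl hq)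
          refine ⟨?_, ?_⟩
          · simpa using (hB.prim _ (hmemN q hq')).1
          · rw [rot_prod c _ _ (hp1 q hq).1 (hp1 q hq).2]; exact Subtype.mem _
      · obtain ⟨q, hq, rfl⟩ := Multiset.mem_map.mp hU
        have := hB.prim _ (hmemN q (Multiset.mem_add.mpr (Or.inr hq)))
        exact ⟨this.1, this.2.1⟩
    · rw [msum_add, msum_add, msum_replicate_single, rot_msum, add_assoc, ← msum_add, ← Multiset.map_add, hQ, hB.sum]
    · rw [Multiset.map_add, Multiset.map_add, Multiset.prod_add, Multiset.prod_add, rot_mprod c Q₁ hp1, h1, 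
        one_mul, prod_c c (Q₂.map Prod.fst), Multiset.map_replicate, Multiset.prod_replicate, single_pA,
        ← pow_add, ← pow_add, Multiset.card_map, add_assoc, ← hcardN, hB.card, pow_card_eq_one']
      intro U hU
      obtain ⟨q, hq, rfl⟩ := Multiset.mem_map.mp hU
      exact hB.pa _ (hmemN q (Multiset.mem_add.mpr (Or.inr hq)))
  have hconst := hcfg.const hS (by simp; rw [← hB.card, hcardN]; ring)
  obtain ⟨W, hW, hWc⟩ : ∃ W ∈ Multiset.replicate k [(c : G)] + Q₁.map (fun q => q.1.rotate q.2) + Q₂.map Prod.fst,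
      pA A W = c := by
    rcases hne with h | h
    · exact ⟨[(c : G)], by simp [Multiset.mem_replicate, h], single_pA c⟩
    · have : Q₂ ≠ 0 := by rintro rfl; simp at h
      obtain ⟨q, hq⟩ := Multiset.exists_mem_of_ne_zero this
      exact ⟨q.1, Multiset.mem_add.mpr (Or.inr (Multiset.mem_map_of_mem _ hq)), 
        hB.pa _ (hmemN q (Multiset.mem_add.mpr (Or.inr hq)))⟩
  obtain ⟨q, hq⟩ := Multiset.exists_mem_of_ne_zero h0
  have hq' : q ∈ Q₁ + Q₂ := Multiset.mem_add.mpr (Or.inl hq)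
  have h3 := hconst (q.1.rotate q.2) (Multiset.mem_add.mpr (Or.inl (Multiset.mem_add.mpr (Or.inr 
    (Multiset.mem_map_of_mem (fun q => q.1.rotate q.2) hq))))) W hW
  rw [hWc, rot_pA c _ _ (hp1 q hq).1 (hp1 q hq).2, mul_eq_right] at h3
  exact hB.dd_ne_one (fun h => hB.prefix_not_mem (hmemN q hq') (hi q hq') (A.inv_mem_iff.mp h)) h3

theorem Base.P3 (hS : IsPOAtom S) (hc : Multiset.card S = Nat.card G) {c : A} {k N} (hB : Base S c k N)
    (v : List G × ℕ) (P : Multiset (List G × ℕ))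
    (hQ : (v ::ₘ P).map Prod.fst = N) (hi : ∀ q ∈ v ::ₘ P, 0 < q.2 ∧ q.2 < q.1.length)
    (j : ℕ) (hj : j ≤ k)
    (Q₁ : Multiset (List G × ℕ)) (hle : Q₁ ≤ P) (h0 : j ≠ 0 ∨ Q₁ ≠ 0) (hne : j < k ∨ Q₁ ≠ P) :
    dd c (v.1.take v.2).prod ^ j * (Q₁.map (ee c)).prod ≠ 1 := by
  intro h1
  rcases Nat.eq_zero_or_pos j with rfl | hj0
  · refine hB.P2 hS (v ::ₘ P) hQ hi Q₁ (hle.trans (Multiset.le_cons_self P v)) (by simpa using h0) ?_ (by simpa using h1)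
    right
    rintro rfl
    have := Multiset.card_le_card hle
    simp at this
  obtain ⟨Q₂, rfl⟩ := Multiset.le_iff_exists_add.mp hle
  obtain ⟨k', rfl⟩ := Nat.exists_eq_add_of_le hj
  have hmemN : ∀ q ∈ v ::ₘ (Q₁ + Q₂), q.1 ∈ N := fun q hq => by rw [← hQ]; exact Multiset.mem_map_of_mem _ hq
  have hcardN : Multiset.card N = Multiset.card Q₁ + Multiset.card Q₂ + 1 := by rw [← hQ]; simp
  have m1 : ∀ q ∈ Q₁, q ∈ v ::ₘ (Q₁ + Q₂) := fun q hq => by simp [hq]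
  have m2 : ∀ q ∈ Q₂, q ∈ v ::ₘ (Q₁ + Q₂) := fun q hq => by simp [hq]
  have hvN : v.1 ∈ N := hmemN v (by simp)
  have hvi := hi v (by simp)
  have hp1 : ∀ q ∈ Q₁, q.1.prod = c ∧ q.2 ≤ q.1.length := fun q hq => 
    ⟨hB.prod_eq (hmemN q (m1 q hq)), (hi q (m1 q hq)).2.le⟩
  set V' := v.1.take v.2 ++ List.replicate j (c : G) ++ v.1.drop v.2 with hV'
  have pV' : PrimL A V' := ins_prim c v.1 (hB.prim _ hvN) _ _ hvi.1 hvi.2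
  have paV' : pA A V' = (MulAut.conjNormal (v.1.take v.2).prod c) ^ j * c := by
    apply pA_eq
    rw [hV', ins_prod, hB.prod_eq hvN, Subgroup.coe_mul]
  have hcfg : IsCfg A S (V' ::ₘ (Multiset.replicate k' [(c : G)] + Q₁.map (fun q => q.1.rotate q.2) + Q₂.map Prod.fst)) := by
    refine ⟨?_, ?_, ?_⟩
    · intro U hU
      rcases Multiset.mem_cons.mp hU with rfl | hU
      · exact ⟨pV'.1, pV'.2.1⟩
      rcases Multiset.mem_add.mp hU with hU | hU
      · rcases Multiset.mem_add.mp hU with hU | hU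
        · rw [Multiset.eq_of_mem_replicate hU]; simp
        · obtain ⟨q, hq, rfl⟩ := Multiset.mem_map.mp hU
          refine ⟨?_, ?_⟩
          · simpa using (hB.prim _ (hmemN q (m1 q hq))).1
          · rw [rot_prod c _ _ (hp1 q hq).1 (hp1 q hq).2]; exact Subtype.mem _
      · obtain ⟨q, hq, rfl⟩ := Multiset.mem_map.mp hU
        have := hB.prim _ (hmemN q (m2 q hq))
        exact ⟨this.1, this.2.1⟩
    · rw [msum_cons, msum_add, msum_add, msum_replicate_single, rot_msum, add_assoc, ← msum_add, ← Multiset.map_add, 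
        hV', ins_coe]
      rw [← hB.sum, ← hQ, Multiset.map_cons, msum_cons, Multiset.replicate_add]
      abel
    · rw [Multiset.map_cons, Multiset.prod_cons, Multiset.map_add, Multiset.map_add, Multiset.prod_add, Multiset.prod_add, 
        rot_mprod c Q₁ hp1, prod_c c (Q₂.map Prod.fst), Multiset.map_replicate, Multiset.prod_replicate, single_pA, paV']
      · have e1 : MulAut.conjNormal (v.1.take v.2).prod c = dd c (v.1.take v.2).prod * c := by simp [dd]
        have e2 : c ^ (j + k' + (Multiset.card Q₁ + Multiset.card Q₂ + 1)) = 1 := by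
          rw [← hcardN, hB.card, pow_card_eq_one']
        rw [e1, mul_pow, Multiset.card_map]
        calc _ = (dd c (v.1.take v.2).prod ^ j * (Q₁.map (ee c)).prod) * c ^ (j + k' + (Multiset.card Q₁ + Multiset.card Q₂ + 1)) := by
              simp only [pow_add, pow_one, mul_assoc, mul_comm, mul_left_comm]
          _ = 1 := by rw [h1, e2, one_mul]
      · intro U hU
        obtain ⟨q, hq, rfl⟩ := Multiset.mem_map.mp hU
        exact hB.pa _ (hmemN q (m2 q hq))
  obtain ⟨W, hW, hWc, hWp⟩ : ∃ W ∈ Multiset.replicate k' [(c : G)] + Q₁.map (fun q => q.1.rotate q.2) + Q₂.map Prod.fst,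
      pA A W = c ∧ PrimL A W := by
    rcases hne with h | h
    · exact ⟨[(c : G)], by simp [Multiset.mem_replicate]; left; left; omega, single_pA c, single_prim c⟩
    · have : Q₂ ≠ 0 := by rintro rfl; simp at h
      obtain ⟨q, hq⟩ := Multiset.exists_mem_of_ne_zero this
      exact ⟨q.1, Multiset.mem_add.mpr (Or.inr (Multiset.mem_map_of_mem _ hq)), 
        hB.pa _ (hmemN q (m2 q hq)), hB.prim _ (hmemN q (m2 q hq))⟩
  have h3 := hcfg.prim_eq hS hc V' W (by simp) (Multiset.mem_cons_of_mem hW) pV' hWp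
  rw [paV', hWc, mul_eq_right, ← map_pow, MulEquiv.map_eq_one_iff] at h3
  have h4 := Nat.le_of_dvd hj0 (orderOf_dvd_of_pow_eq_one h3)
  rw [hB.gen, ← hB.card, hcardN] at h4
  omega

end Davenport4

section Davenport5

open scoped IsMulCommutative

variable {G : Type*} [Group G] {S : Multiset G} {A : Subgroup G} [A.Normal] [IsMulCommutative A] [Finite G]

theorem invert (c : A) (η : G) (h : dd c η⁻¹ = dd c η) (ho : orderOf (dd c η) = Nat.card A) :
    ∀ a : A, MulAut.conjNormal η a = a⁻¹ := by
  have h1 : MulAut.conjNormal η (dd c η) = (dd c η)⁻¹ := by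
    conv_lhs => rw [← h]
    rw [dd, map_mul, ← MulAut.mul_apply, ← map_mul, mul_inv_cancel, map_one, MulAut.one_apply, map_inv, dd]
    rw [mul_inv_rev, inv_inv]
  intro a
  obtain ⟨n, hn⟩ := gen_zpow ho a
  rw [← hn, map_zpow, h1, inv_zpow]

theorem Base.host (hS : IsPOAtom S) (hc : Multiset.card S = Nat.card G) {c : A} {k N} (hB : Base S c k N)
    (v : List G × ℕ) (P : Multiset (List G × ℕ))
    (hQ : (v ::ₘ P).map Prod.fst = N) (hi : ∀ q ∈ v ::ₘ P, 0 < q.2 ∧ q.2 < q.1.length) (hk : 1 ≤ k) :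
    dd c (v.1.take v.2).prod ^ k * (P.map (ee c)).prod = 1 ∨ 
      ∀ q ∈ P, ee c q = dd c (v.1.take v.2).prod := by
  by_contra hcon
  push Not at hcon
  obtain ⟨hnf, q, hq, hqne⟩ := hcon
  have hcardN : Multiset.card N = Multiset.card P + 1 := by rw [← hQ]; simp
  have := zero_sum_const (Multiset.replicate k (dd c (v.1.take v.2).prod) + P.map (ee c)) (by
    rw [← hB.card, hcardN]; simp; omega) (by
    intro s hs h0 _ h1
    obtain ⟨s₁, hs₁, s₂, hs₂, rfl⟩ := le_add_split _ _ _ hs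
    obtain ⟨j, hj, rfl⟩ := Multiset.le_replicate_iff.mp hs₁
    obtain ⟨Q₁, hQ₁, rfl⟩ := exists_le_of_le_map _ _ _ hs₂
    rw [Multiset.prod_add, Multiset.prod_replicate] at h1
    refine hB.P3 hS hc v P hQ hi j hj Q₁ hQ₁ ?_ ?_ h1
    · by_contra h
      push Not at h
      rw [h.1, h.2] at h0
      simp at h0
    · by_contra h
      push Not at h
      have hjk : j = k := by omega
      rw [hjk, h.2] at h1
      exact hnf h1)
  exact hqne (this _ (Multiset.mem_add.mpr (Or.inr (Multiset.mem_map_of_mem _ hq))) _ 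
    (Multiset.mem_add.mpr (Or.inl (by simp [Multiset.mem_replicate]; omega))))

theorem Base.order_of_const (hS : IsPOAtom S) (hc : Multiset.card S = Nat.card G) {c : A} {k N} (hB : Base S c k N)
    (v : List G × ℕ) (P : Multiset (List G × ℕ))
    (hQ : (v ::ₘ P).map Prod.fst = N) (hi : ∀ q ∈ v ::ₘ P, 0 < q.2 ∧ q.2 < q.1.length) 
    (hcon : ∀ q ∈ P, ee c q = dd c (v.1.take v.2).prod) :
    orderOf (dd c (v.1.take v.2).prod) = Nat.card A := by
  set d := dd c (v.1.take v.2).prod with hd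
  have hcardN : Multiset.card N = Multiset.card P + 1 := by rw [← hQ]; simp
  have hvN : v.1 ∈ N := by rw [← hQ]; simp
  have hd1 : d ≠ 1 := hB.dd_ne_one (hB.prefix_not_mem hvN (hi v (by simp)))
  have hdvd := orderOf_dvd_natCard d
  have hle := Nat.le_of_dvd Nat.card_pos hdvd
  have hpos := orderOf_pos d
  have hcd := hB.card
  by_contra hne
  rcases Nat.lt_or_ge (orderOf d) (Nat.card A - 1) with h | h
  · obtain ⟨Q₁, hQ₁, hQc⟩ := mexists_le_card P (orderOf d - min (orderOf d) k) (by omega)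
    refine hB.P3 hS hc v P hQ hi (min (orderOf d) k) (min_le_right _ _) Q₁ hQ₁ ?_ ?_ ?_
    · by_contra h'
      push Not at h'
      rw [h'.2] at hQc
      simp at hQc
      omega
    · by_contra h'
      push Not at h'
      rw [h'.2] at hQc
      omega
    · have : Q₁.map (ee c) = Multiset.replicate (orderOf d - min (orderOf d) k) d := by
        rw [Multiset.eq_replicate]
        refine ⟨by simp [hQc], ?_⟩
        intro b hb
        obtain ⟨q, hq, rfl⟩ := Multiset.mem_map.mp hb
        exact hcon q (Multiset.mem_of_le hQ₁ hq)
      rw [this, Multiset.prod_replicate, ← hd, ← pow_add, Nat.add_sub_cancel' (min_le_left _ _), pow_orderOf_eq_one]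
  · have e : Nat.card A = orderOf d + 1 := by omega
    rw [e] at hdvd
    have := (Nat.dvd_add_right (dvd_refl _)).mp hdvd
    rw [Nat.dvd_one, orderOf_eq_one_iff] at this
    exact hd1 this

theorem map_pair (R : Multiset (List G)) : (R.map (fun Y => (Y, 1))).map Prod.fst = R := by
  simp [Multiset.map_map]

theorem Base.two_host (hS : IsPOAtom S) (hc : Multiset.card S = Nat.card G) {c : A} {k N} (hB : Base S c k N)
    (hk : 1 ≤ k) (U V : List G) (R : Multiset (List G)) (hN : N = U ::ₘ V ::ₘ R) (i₁ i₂ : ℕ)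
    (h1 : 0 < i₁ ∧ i₁ < U.length) (h2 : 0 < i₂ ∧ i₂ < U.length) (hne : ee c (U, i₁) ≠ ee c (U, i₂)) :
    ((ee c (U, i₁) = dd c (V.take 1).prod ∧ ee c (U, i₂) = dd c (V.take 1).prod ^ 2) ∨ 
     (ee c (U, i₂) = dd c (V.take 1).prod ∧ ee c (U, i₁) = dd c (V.take 1).prod ^ 2)) ∧ 
    orderOf (dd c (V.take 1).prod) = Nat.card A ∧ ∀ W ∈ R, ee c (W, 1) = dd c (V.take 1).prod := by
  set d := dd c (V.take 1).prod with hd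
  have hcardN : Multiset.card N = Multiset.card R + 2 := by rw [hN]; simp
  have hcd := hB.card
  have hQ : ∀ i, ((V, 1) ::ₘ (U, i) ::ₘ R.map (fun Y => (Y, 1))).map Prod.fst = N := by
    intro i
    rw [Multiset.map_cons, Multiset.map_cons, map_pair, hN, Multiset.cons_swap]
  have hi : ∀ i, (0 < i ∧ i < U.length) → ∀ q ∈ (V, 1) ::ₘ (U, i) ::ₘ R.map (fun Y => (Y, 1)), 
      0 < q.2 ∧ q.2 < q.1.length := by
    intro i h q hq
    rcases Multiset.mem_cons.mp hq with rfl | hq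
    · exact ⟨Nat.one_pos, hB.len V (by simp [hN])⟩
    rcases Multiset.mem_cons.mp hq with rfl | hq
    · exact h
    obtain ⟨Y, hY, rfl⟩ := Multiset.mem_map.mp hq
    exact ⟨Nat.one_pos, hB.len Y (by simp [hN, hY])⟩
  have key : ∀ i₁ i₂, (0 < i₁ ∧ i₁ < U.length) → 
      (∀ q ∈ (U, i₁) ::ₘ R.map (fun Y => (Y, 1)), ee c q = d) → 
      d ^ k * (((U, i₂) ::ₘ R.map (fun Y => (Y, 1))).map (ee c)).prod = 1 → 
      (ee c (U, i₁) = d ∧ ee c (U, i₂) = d ^ 2) ∧ orderOf d = Nat.card A ∧ ∀ W ∈ R, ee c (W, 1) = d := by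
    intro i₁ i₂ h1 hcon hf
    have hR : ∀ W ∈ R, ee c (W, 1) = d := fun W hW => 
      hcon (W, 1) (Multiset.mem_cons_of_mem (Multiset.mem_map_of_mem (fun Y => (Y, 1)) hW))
    have ho := hB.order_of_const hS hc (V, 1) _ (hQ i₁) (hi i₁ h1) hcon
    refine ⟨⟨hcon (U, i₁) (by simp), ?_⟩, ho, hR⟩
    have e : (R.map (fun Y => (Y, 1))).map (ee c) = Multiset.replicate (Multiset.card R) d := by
      rw [Multiset.eq_replicate]
      refine ⟨by simp, ?_⟩
      intro b hb
      rw [Multiset.map_map] at hb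
      obtain ⟨W, hW, rfl⟩ := Multiset.mem_map.mp hb
      exact hR W hW
    rw [Multiset.map_cons, Multiset.prod_cons, e, Multiset.prod_replicate] at hf
    have e2 : d ^ (k + Multiset.card R) * ee c (U, i₂) = 1 := by
      rw [← hf, pow_add]; simp only [mul_assoc, mul_comm, mul_left_comm]
    have e3 : d ^ (k + Multiset.card R) * d ^ 2 = 1 := by
      rw [← pow_add, show k + Multiset.card R + 2 = Nat.card A by omega, pow_card_eq_one']
    exact mul_left_cancel (e2.trans e3.symm)
  rcases hB.host hS hc (V, 1) _ (hQ i₁) (hi i₁ h1) hk with f1 | c1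
  · rcases hB.host hS hc (V, 1) _ (hQ i₂) (hi i₂ h2) hk with f2 | c2
    · exfalso
      apply hne
      have := mul_left_cancel (f1.trans f2.symm)
      simpa using this
    · obtain ⟨h, h'⟩ := key i₂ i₁ h2 c2 f1
      exact ⟨Or.inr h, h'⟩
  · rcases hB.host hS hc (V, 1) _ (hQ i₂) (hi i₂ h2) hk with f2 | c2
    · obtain ⟨h, h'⟩ := key i₁ i₂ h1 c1 f2
      exact ⟨Or.inl h, h'⟩
    · exfalso
      apply hne
      rw [c1 (U, i₁) (by simp), c2 (U, i₂) (by simp)]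

theorem Base.q3_fin (hS : IsPOAtom S) (hc : Multiset.card S = Nat.card G) {c : A} {k N} (hB : Base S c k N)
    (hk : 2 ≤ k) (U V : List G) (R : Multiset (List G)) (hN : N = U ::ₘ V ::ₘ R) (i₁ i₂ : ℕ)
    (h1 : 0 < i₁ ∧ i₁ < U.length) (h2 : 0 < i₂ ∧ i₂ < U.length) (hne : ee c (U, i₁) ≠ ee c (U, i₂))
    (e1 : ee c (U, i₁) = dd c (V.take 1).prod) (e2 : ee c (U, i₂) = dd c (V.take 1).prod ^ 2)
    (ho : orderOf (dd c (V.take 1).prod) = Nat.card A) (hR : ∀ W ∈ R, ee c (W, 1) = dd c (V.take 1).prod) : False := by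
  set d := dd c (V.take 1).prod with hd
  have hcardN : Multiset.card N = Multiset.card R + 2 := by rw [hN]; simp
  have hcd := hB.card
  have hUN : U ∈ N := by simp [hN]
  have hVN : V ∈ N := by simp [hN]
  have hV2 := hB.len V hVN
  have hgV : (V.take 1).prod ∉ A := hB.prefix_not_mem hVN ⟨Nat.one_pos, hV2⟩
  have hh2 : (U.take i₂).prod⁻¹ ∉ A := fun h => hB.prefix_not_mem hUN h2 (A.inv_mem_iff.mp h)
  have e2' : dd c (U.take i₂).prod⁻¹ = d ^ 2 := e2
  rcases Nat.lt_or_ge k (Nat.card A / 2 + Nat.card A % 2) with hlt | hge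
  · have hRpos : 0 < Multiset.card R := by omega
    obtain ⟨W, hW⟩ := Multiset.card_pos_iff_exists_mem.mp hRpos
    obtain ⟨R', hR'⟩ := Multiset.exists_cons_of_mem hW
    have hWN : W ∈ N := by simp [hN, hW]
    have hdW : dd c (W.take 1).prod = d := by
      rcases (hB.two_host hS hc (by omega) U W (V ::ₘ R') (by rw [hN, hR', Multiset.cons_swap V]) i₁ i₂ h1 h2 hne).1 with h | h
      · rw [← h.1, e1]
      · exfalso
        have h3 : d ^ 4 = d := by
          have h5 := h.2
          rw [← h.1, e2, e1, ← pow_mul] at h5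
          exact h5.symm
        have h4 : d ^ 3 = 1 := by
          rw [pow_succ, mul_eq_right] at h3; exact h3
        have := Nat.le_of_dvd (by norm_num) (orderOf_dvd_of_pow_eq_one h4)
        omega
    set η := (W.take 1).prod with hη
    have hηA : η ∉ A := hB.prefix_not_mem hWN ⟨Nat.one_pos, hB.len W hWN⟩
    have hinv := invert c η (by rw [hdW]; exact hR W hW) (by rw [hdW, ho])
    have hdc : d = c⁻¹ * c⁻¹ := by rw [← hdW, dd, hinv]
    have hphi : MulAut.conjNormal (U.take i₂).prod⁻¹ c = d ^ 2 * c := by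
      rw [← e2', dd, inv_mul_cancel_right]
    have hprod : dd c (η * (U.take i₂).prod⁻¹) = c * c := by
      rw [dd, map_mul, MulAut.mul_apply, hphi, hinv, hdc]
      simp [pow_two, mul_assoc]
    refine hB.P1 hS hc {η, η * (U.take i₂).prod⁻¹} ?_ (by simpa using hk) (by simp) ?_
    · intro g hg
      simp only [Multiset.insert_eq_cons, Multiset.mem_cons, Multiset.mem_singleton] at hg
      rcases hg with rfl | rfl
      · exact hηA
      · intro hmem
        have : dd c (η * (U.take i₂).prod⁻¹) = 1 := by
          rw [← dd_congr c (g := 1) (by simpa using hmem)]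
          simp [dd]
        apply hB.dd_ne_one hgV
        rw [← hd, hdc, ← mul_inv_rev, ← hprod, this, inv_one]
    · simp only [Multiset.insert_eq_cons, Multiset.map_cons, Multiset.map_singleton, Multiset.prod_cons, 
        Multiset.prod_singleton]
      rw [hprod, hdW, hdc]; simp [mul_assoc]
  · refine hB.P1 hS hc (Multiset.replicate (Nat.card A / 2) (U.take i₂).prod⁻¹ + 
      Multiset.replicate (Nat.card A % 2) (V.take 1).prod) ?_ (by simpa using hge) ?_ ?_
    · intro g hg
      rcases Multiset.mem_add.mp hg with hg | hg
      · rw [Multiset.eq_of_mem_replicate hg]; exact hh2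
      · rw [Multiset.eq_of_mem_replicate hg]; exact hgV
    · intro h0
      have := congrArg Multiset.card h0
      simp at this
      omega
    · rw [Multiset.map_add, Multiset.prod_add, Multiset.map_replicate, Multiset.map_replicate, 
        Multiset.prod_replicate, Multiset.prod_replicate, e2', ← hd, ← pow_mul, ← pow_add, Nat.div_add_mod, pow_card_eq_one']

theorem Base.q3 (hS : IsPOAtom S) (hc : Multiset.card S = Nat.card G) {c : A} {k N} (hB : Base S c k N)
    (U : List G) (hU : U ∈ N) (i₁ i₂ : ℕ)
    (h1 : 0 < i₁ ∧ i₁ < U.length) (h2 : 0 < i₂ ∧ i₂ < U.length) 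
    (hne : (U.take i₁).prod⁻¹ * (U.take i₂).prod ∉ A) : False := by
  have hx : ee c (U, i₁) ≠ ee c (U, i₂) := by
    intro h
    have := hB.dd_inj h
    rw [inv_inv] at this
    apply hne
    have h' := ‹A.Normal›.mem_comm this
    simpa using A.inv_mem h'
  have hy : dd c (U.take i₁).prod ≠ dd c (U.take i₂).prod := fun h => hne (hB.dd_inj h)
  have g1 := hB.prefix_not_mem hU h1
  have g2 := hB.prefix_not_mem hU h2
  have hm : 3 ≤ Nat.card A := by
    let := Fintype.ofFinite A
    rw [Nat.card_eq_fintype_card]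
    exact Fintype.two_lt_card_iff.mpr ⟨1, _, _, (hB.dd_ne_one g1).symm, (hB.dd_ne_one g2).symm, hy⟩
  obtain ⟨R, hN⟩ := Multiset.exists_cons_of_mem hU
  have hcd := hB.card
  have hcardN : Multiset.card N = Multiset.card R + 1 := by rw [hN]; simp
  have hQ : ∀ i, ((U, i) ::ₘ R.map (fun Y => (Y, 1))).map Prod.fst = N := by
    intro i
    rw [Multiset.map_cons, map_pair, hN]
  have hi : ∀ i, (0 < i ∧ i < U.length) → ∀ q ∈ (U, i) ::ₘ R.map (fun Y => (Y, 1)), 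
      0 < q.2 ∧ q.2 < q.1.length := by
    intro i h q hq
    rcases Multiset.mem_cons.mp hq with rfl | hq
    · exact h
    obtain ⟨Y, hY, rfl⟩ := Multiset.mem_map.mp hq
    exact ⟨Nat.one_pos, hB.len Y (by simp [hN, hY])⟩
  rcases Multiset.empty_or_exists_mem R with hR0 | ⟨V, hV⟩
  · have := zero_sum_const (((U.take i₁).prod ::ₘ Multiset.replicate (k - 1) (U.take i₂).prod).map (dd c)) (by
      rw [hR0] at hcardN; simp at hcardN ⊢; omega) (by
      intro s hs h0 _ hs1
      obtain ⟨Γ, hΓ, rfl⟩ := exists_le_of_le_map _ _ _ hs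
      refine hB.P1 hS hc Γ ?_ ?_ (by simpa using h0) hs1
      · intro g hg
        rcases Multiset.mem_cons.mp (Multiset.mem_of_le hΓ hg) with rfl | hg
        · exact g1
        · rw [Multiset.eq_of_mem_replicate hg]; exact g2
      · have := Multiset.card_le_card hΓ
        rw [hR0] at hcardN
        simp at this hcardN
        omega)
    refine hy (this _ (by simp) _ ?_)
    rw [hR0] at hcardN
    simp at hcardN
    apply Multiset.mem_map_of_mem
    simp [Multiset.mem_replicate]; right; omega
  obtain ⟨R', hR⟩ := Multiset.exists_cons_of_mem hV
  have hcardR : Multiset.card R = Multiset.card R' + 1 := by rw [hR]; simp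
  rcases Nat.lt_or_ge k 2 with hk | hk
  · rcases Nat.eq_zero_or_pos k with hk0 | hk1
    · obtain ⟨W, hW⟩ := Multiset.card_pos_iff_exists_mem.mp (show 0 < Multiset.card R' by omega)
      have key : ∀ i, (0 < i ∧ i < U.length) → ee c (U, i) = ee c (W, 1) := by
        intro i h
        have := zero_sum_const (((U, i) ::ₘ R'.map (fun Y => (Y, 1))).map (ee c)) (by simp; omega) (by
          intro s hs h0 _ hs1
          obtain ⟨Q₁, hQ₁, rfl⟩ := exists_le_of_le_map _ _ _ hs
          refine hB.P2 hS _ (hQ i) (hi i h) Q₁ ?_ (by simpa using h0) ?_ hs1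
          · refine hQ₁.trans ?_
            rw [hR, Multiset.map_cons]
            exact Multiset.cons_le_cons _ (Multiset.le_cons_self _ _)
          · right
            rintro rfl
            have := Multiset.card_le_card hQ₁
            simp at this
            omega)
        exact this _ (by simp) _ (Multiset.mem_map_of_mem _ (Multiset.mem_cons_of_mem (Multiset.mem_map_of_mem (fun Y => (Y, 1)) hW)))
      exact hx ((key i₁ h1).trans (key i₂ h2).symm)
    · have key : ∀ i, (0 < i ∧ i < U.length) → ee c (U, i) = ee c (V, 1) := by
        intro i h
        have := zero_sum_const (((U, i) ::ₘ R.map (fun Y => (Y, 1))).map (ee c)) (by simp; omega) (by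
          intro s hs h0 _ hs1
          obtain ⟨Q₁, hQ₁, rfl⟩ := exists_le_of_le_map _ _ _ hs
          exact hB.P2 hS _ (hQ i) (hi i h) Q₁ hQ₁ (by simpa using h0) (by left; omega) hs1)
        exact this _ (by simp) _ (Multiset.mem_map_of_mem _ (Multiset.mem_cons_of_mem (Multiset.mem_map_of_mem (fun Y => (Y, 1)) hV)))
      exact hx ((key i₁ h1).trans (key i₂ h2).symm)
  · have hN' : N = U ::ₘ V ::ₘ R' := by rw [hN, hR]
    obtain ⟨h | h, ho, hR'⟩ := hB.two_host hS hc (by omega) U V R' hN' i₁ i₂ h1 h2 hx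
    · exact hB.q3_fin hS hc hk U V R' hN' i₁ i₂ h1 h2 hx h.1 h.2 ho hR'
    · exact hB.q3_fin hS hc hk U V R' hN' i₂ i₁ h2 h1 hx.symm h.1 h.2 ho hR'

end Davenport5

section Davenport6

open scoped IsMulCommutative

variable {G : Type*} [Group G] {S : Multiset G} {A : Subgroup G} [A.Normal] [IsMulCommutative A] [Finite G]

theorem rotate_prod_one (l : List G) (h : l.prod = 1) (i : ℕ) : (l.rotate i).prod = 1 := by
  rw [List.rotate_eq_drop_append_take_mod]
  have e : l.prod = (l.take (i % l.length)).prod * (l.drop (i % l.length)).prod := by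
    rw [← List.prod_append, List.take_append_drop]
  rw [List.prod_append]
  rw [h] at e
  exact mul_eq_one_comm.mp e.symm

/-- at most one nontrivial coset -/
theorem index_le_two (hS : IsPOAtom S) (hc : Multiset.card S = Nat.card G)
    (hself : ∀ g, (∀ a ∈ A, g * a = a * g) → g ∈ A) (x y : G) (hx : x ∉ A) (hy : y ∉ A) : x⁻¹ * y ∈ A := by
  classical
  by_contra hxy
  obtain ⟨l, hl, hp⟩ := hS.1
  set p : ℕ → G := fun i => (l.take i).prod with hpdef
  have hsurj : ∀ g, ∃ i < l.length, p i = g := by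
    intro g
    obtain ⟨i, hi, hig⟩ := (prefix_surj hS hc l hl hp).surjOn (Set.mem_univ g)
    exact ⟨i, by simpa using hi, hig⟩
  have p0 : p 0 = 1 := by simp [p]
  -- first index outside
  have ex1 : ∃ j, p j ∉ A := by
    obtain ⟨i, _, hi⟩ := hsurj x
    exact ⟨i, by rw [hi]; exact hx⟩
  set j := Nat.find ex1 with hj
  have hj1 : p j ∉ A := Nat.find_spec ex1
  have hj2 : ∀ t < j, p t ∈ A := fun t ht => by
    have := Nat.find_min ex1 ht
    simpa using this
  have ex2 : ∃ i, i < l.length ∧ p i ∉ A ∧ (p j)⁻¹ * p i ∉ A := by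
    by_cases h : (p j)⁻¹ * x ∈ A
    · obtain ⟨i, hil, hi⟩ := hsurj y
      refine ⟨i, hil, by rw [hi]; exact hy, ?_⟩
      rw [hi]
      intro h'
      apply hxy
      have := A.mul_mem (A.inv_mem h) h'
      simpa [mul_assoc] using this
    · obtain ⟨i, hil, hi⟩ := hsurj x
      exact ⟨i, hil, by rw [hi]; exact hx, by rw [hi]; exact h⟩
  set n := Nat.find ex2 with hn
  obtain ⟨hnl, hn1, hn2⟩ := Nat.find_spec ex2
  have hn3 : ∀ t < n, p t ∈ A ∨ (p j)⁻¹ * p t ∈ A := fun t ht => by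
    have := Nat.find_min ex2 ht
    by_contra h
    push Not at h
    exact this ⟨by omega, h.1, h.2⟩
  have hjn : j < n := by
    rcases lt_trichotomy n j with h | h | h
    · exact absurd (hj2 n h) hn1
    · exfalso; apply hn2; rw [← hn, h, inv_mul_cancel]; exact A.one_mem
    · exact h
  -- class of n - 1
  have ex3 : ∃ t, t ≤ n - 1 ∧ (p t)⁻¹ * p (n - 1) ∉ A := by
    rcases hn3 (n - 1) (by omega) with h | h
    · refine ⟨j, by omega, fun h' => hj1 ?_⟩
      have := A.mul_mem h (A.inv_mem h')
      simpa using this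
    · refine ⟨0, by omega, fun h' => hj1 ?_⟩
      rw [p0] at h'
      have := A.mul_mem h' (A.inv_mem h)
      simpa using this
  obtain ⟨t0, ht0, ht0'⟩ := ex3
  set b := Nat.findGreatest (fun t => (p t)⁻¹ * p (n - 1) ∉ A) (n - 1) with hb
  have hb1 : (p b)⁻¹ * p (n - 1) ∉ A := Nat.findGreatest_spec (P := fun t => (p t)⁻¹ * p (n - 1) ∉ A) ht0 ht0'
  have hbn : b ≤ n - 1 := Nat.findGreatest_le _
  have hb2 : ∀ t, b < t → t ≤ n - 1 → (p t)⁻¹ * p (n - 1) ∈ A := fun t ht ht' => by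
    have := Nat.findGreatest_is_greatest ht ht'
    simpa using this
  have hbn' : b < n - 1 := by
    rcases Nat.lt_or_ge b (n - 1) with h | h
    · exact h
    · exfalso; apply hb1
      have : b = n - 1 := by omega
      rw [this, inv_mul_cancel]; exact A.one_mem
  have hbA : (p b)⁻¹ * p n ∉ A := by
    intro h
    rcases hn3 b (by omega) with h1 | h1
    · exact hn1 (by simpa using A.mul_mem h1 h)
    · exact hn2 (by simpa [mul_assoc] using A.mul_mem h1 h)
  have hn4 : (p (n - 1))⁻¹ * p n ∉ A := by
    intro h
    rcases hn3 (n - 1) (by omega) with h1 | h1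
    · exact hn1 (by simpa using A.mul_mem h1 h)
    · exact hn2 (by simpa [mul_assoc] using A.mul_mem h1 h)
  -- rotate
  set l' := l.rotate b with hl'
  have hl'p : l'.prod = 1 := rotate_prod_one l hp b
  have hl'S : (l' : Multiset G) = S := by rw [hl', rot_coe, hl]
  have hpre : ∀ s, b + s ≤ l.length → (l'.take s).prod = (p b)⁻¹ * p (b + s) := by
    intro s hs
    have e1 : l'.take s = (l.drop b).take s := by
      rw [hl', List.rotate_eq_drop_append_take (by omega), List.take_append_of_le_length (by simp; omega)]
    have e2 : l.take (b + s) = l.take b ++ (l.drop b).take s := List.take_add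
    rw [e1]
    simp only [p]
    rw [e2, List.prod_append, inv_mul_cancel_left]
  have hl'len : l'.length = l.length := by simp [hl']
  set v := l'.take (n - b) with hv
  have hvlen : v.length = n - b := by simp [hv, hl'len]; omega
  obtain ⟨w, rest, hw, hprim⟩ := first_chunk A (l'.drop (n - b)) v (by
      intro h; rw [h] at hvlen; simp at hvlen; omega) (by
      intro i hi hi'
      rw [hv, List.take_take, min_eq_left (by omega), hpre i (by omega)]
      intro hm
      rcases Nat.lt_or_ge (b + i) n with h | h
      · apply hb1
        simpa [mul_assoc] using A.mul_mem hm (hb2 (b + i) (by omega) (by omega))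
      · have : b + i = n := by omega
        rw [this] at hm
        exact hbA hm) (by rw [hv, List.take_append_drop, hl'p]; exact A.one_mem)
  have hsplit : l' = (v ++ w) ++ rest := by
    rw [List.append_assoc, ← hw, hv, List.take_append_drop]
  obtain ⟨LL, hLL, hLp⟩ := exists_refine A rest.length rest le_rfl (by
    rw [hsplit, List.prod_append] at hl'p
    rw [← A.mul_mem_cancel_left hprim.2.1, hl'p]; exact A.one_mem)
  have hfl : ((v ++ w) :: LL).flatten = l' := by rw [List.flatten_cons, hLL, hsplit]
  obtain ⟨c, k, N, hB, hmem⟩ := exists_base hS hc hself ((v ++ w) :: LL) (by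
    intro U hU
    rcases List.mem_cons.mp hU with rfl | hU
    · exact hprim
    · exact hLp U hU) (by rw [hfl, hl'S]) (by rw [hfl, hl'p])
  have hvw2 : (v ++ w).length ≥ n - b + 1 := by
    rcases Nat.lt_or_ge (v ++ w).length (n - b + 1) with h | h
    · exfalso
      simp only [List.length_append, hvlen] at h
      have hw0 : w = [] := List.length_eq_zero_iff.mp (by omega)
      have := hprim.2.1
      rw [hw0, List.append_nil, hv, hpre _ (by omega), Nat.add_sub_cancel' (by omega)] at this
      exact hbA this
    · exact h
  refine hB.q3 hS hc (v ++ w) (hmem _ (by simp) (by omega)) (n - b - 1) (n - b) ⟨by omega, by omega⟩ ⟨by omega, by omega⟩ ?_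
  rw [List.take_append_of_le_length (by omega), List.take_append_of_le_length (by omega), hv, List.take_take, List.take_take,
    min_self, min_eq_left (by omega), hpre _ (by omega), hpre _ (by omega)]
  rw [show b + (n - b - 1) = n - 1 by omega, show b + (n - b) = n by omega]
  intro h
  apply hn4
  simpa [mul_assoc] using h

/-- structure in the index-two case -/
theorem core_struct (h : HasFull G) (hself : ∀ g, (∀ a ∈ A, g * a = a * g) → g ∈ A) (hA : A ≠ ⊤) :
    ∃ c : A, ∃ η : G, η ∉ A ∧ orderOf c = Nat.card A ∧ (∀ g, g ∉ A → η⁻¹ * g ∈ A) ∧ η * η = 1 ∧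
      (∀ a : A, η * a * η⁻¹ = (a : G)⁻¹) ∧ Odd (Nat.card A) ∧ 3 ≤ Nat.card A := by
  obtain ⟨S, hS, hc⟩ := h
  obtain ⟨l, hl, hp⟩ := hS.1
  obtain ⟨LL, hLL, hLp⟩ := exists_refine A l.length l le_rfl (by rw [hp]; exact A.one_mem)
  obtain ⟨c, k, N, hB, -⟩ := exists_base hS hc hself LL hLp (by rw [hLL, hl]) (by rw [hLL, hp])
  obtain ⟨g0, hg0⟩ : ∃ g, g ∉ A := by
    by_contra h
    push Not at h
    exact hA (Subgroup.eq_top_iff' A |>.mpr h)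
  have hidx := index_le_two hS hc hself
  obtain ⟨V, hV, i, hi, hi', -⟩ := hB.visit g0 hg0
  obtain ⟨R, hN⟩ := Multiset.exists_cons_of_mem hV
  set η := (V.take i).prod with hη
  have hηA : η ∉ A := hB.prefix_not_mem hV ⟨hi, hi'⟩
  have ho := hB.order_of_const hS hc (V, i) (R.map (fun Y => (Y, 1))) (by
    rw [Multiset.map_cons, map_pair, hN]) (by
    intro q hq
    rcases Multiset.mem_cons.mp hq with rfl | hq
    · exact ⟨hi, hi'⟩
    obtain ⟨Y, hY, rfl⟩ := Multiset.mem_map.mp hq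
    exact ⟨Nat.one_pos, hB.len Y (by simp [hN, hY])⟩) (by
    intro q hq
    obtain ⟨Y, hY, rfl⟩ := Multiset.mem_map.mp hq
    have hYN : Y ∈ N := by simp [hN, hY]
    have hYA : (Y.take 1).prod ∉ A := hB.prefix_not_mem hYN ⟨Nat.one_pos, hB.len Y hYN⟩
    exact dd_congr c (hidx _ _ (fun h => hYA (A.inv_mem_iff.mp h)) hηA))
  simp only at ho
  rw [← hη] at ho
  have hinv := invert c η (dd_congr c (hidx _ _ (fun h => hηA (A.inv_mem_iff.mp h)) hηA)) ho
  have hdc : dd c η = c⁻¹ * c⁻¹ := by rw [dd, hinv]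
  have hodd : Odd (Nat.card A) := by
    rw [← Nat.not_even_iff_odd]
    rintro ⟨t, ht⟩
    have hpos : 0 < Nat.card A := Nat.card_pos
    have h1 : dd c η ^ t = 1 := by
      rw [hdc, ← pow_two, ← pow_mul, two_mul, ← ht, pow_card_eq_one']
    have := Nat.le_of_dvd (by omega) (orderOf_dvd_of_pow_eq_one h1)
    omega
  have hη2 : η * η ∈ A := by
    have := hidx η⁻¹ η (fun h => hηA (A.inv_mem_iff.mp h)) hηA
    simpa using this
  have hsq : η * η = 1 := by
    have h1 := hinv ⟨η * η, hη2⟩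
    have h2 := congrArg Subtype.val h1
    rw [MulAut.conjNormal_apply] at h2
    simp only [Subgroup.coe_inv] at h2
    have h3 : η * (η * η) * η⁻¹ = η * η := by group
    rw [h3] at h2
    have h4 : (⟨η * η, hη2⟩ : A) ^ 2 = 1 := by
      apply Subtype.ext
      rw [pow_two, Subgroup.coe_mul]
      simp only
      nth_rewrite 1 [h2]
      simp
    have h5 := orderOf_dvd_of_pow_eq_one h4
    have h6 := orderOf_dvd_natCard (⟨η * η, hη2⟩ : A)
    have h7 : Nat.Coprime 2 (Nat.card A) := (Nat.coprime_two_left).mpr hodd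
    have h8 := Nat.dvd_gcd h5 h6
    rw [h7.gcd_eq_one, Nat.dvd_one, orderOf_eq_one_iff] at h8
    exact congrArg Subtype.val h8
  refine ⟨c, η, hηA, hB.gen, fun g hg => hidx _ _ hηA hg, hsq, ?_, hodd, ?_⟩
  · intro a
    have := congrArg Subtype.val (hinv a)
    rwa [MulAut.conjNormal_apply] at this
  · obtain ⟨t, ht⟩ := hodd
    have : Nat.card A ≠ 1 := by
      intro h1
      rw [h1, orderOf_eq_one_iff] at ho
      exact hB.dd_ne_one hηA ho
    omega

theorem core (h : HasFull G) (hself : ∀ g, (∀ a ∈ A, g * a = a * g) → g ∈ A) (hA : A ≠ ⊤) :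
    ∃ m : ℕ, Odd m ∧ 3 ≤ m ∧ Nonempty (G ≃* DihedralGroup m) := by
  obtain ⟨c, η, hηA, hgen, hidx, hsq, hinv, hodd, h3⟩ := core_struct h hself hA
  set m := Nat.card A with hm
  have : NeZero m := ⟨by omega⟩
  refine ⟨m, hodd, h3, ?_⟩
  have hcm : (c : G) ^ m = 1 := by
    rw [← Subgroup.coe_pow, ← hgen, pow_orderOf_eq_one]; rfl
  have hz : ∀ n : ℤ, ((c : G) ^ n = 1) ↔ (m : ℤ) ∣ n := by
    intro n
    rw [← orderOf_dvd_iff_zpow_eq_one, Subgroup.orderOf_coe, hgen]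
  have hηc : ∀ n : ℤ, η * (c : G) ^ n = (c : G) ^ (-n) * η := by
    intro n
    have := hinv (c ^ n)
    rw [Subgroup.coe_zpow] at this
    rw [zpow_neg, ← this]; group
  -- power map on ZMod
  let e : ZMod m → G := fun i => (c : G) ^ (i.val : ℤ)
  have hcong : ∀ (a b : ℤ), (a : ZMod m) = b → (c : G) ^ a = (c : G) ^ b := by
    intro a b hab
    have h1 : (m : ℤ) ∣ a - b := by
      rw [← ZMod.intCast_zmod_eq_zero_iff_dvd]
      push_cast; rw [hab, sub_self]
    have := (hz _).mpr h1
    rwa [zpow_sub, mul_inv_eq_one] at this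
  have hadd : ∀ i j, e (i + j) = e i * e j := by
    intro i j
    simp only [e]
    rw [← zpow_add]
    exact hcong _ _ (by simp)
  have hneg : ∀ i, e (-i) = (e i)⁻¹ := by
    intro i
    simp only [e]
    rw [← zpow_neg]
    exact hcong _ _ (by simp)
  have hηe : ∀ i, e i * η = η * (e i)⁻¹ := by
    intro i
    simp only [e]
    have := hηc (-(i.val : ℤ))
    rw [neg_neg] at this
    rw [← this, zpow_neg]
  have hsurjA : ∀ a : A, ∃ i, e i = a := by
    intro a
    obtain ⟨n, hn⟩ := gen_zpow hgen a
    refine ⟨(n : ZMod m), ?_⟩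
    rw [← hn, Subgroup.coe_zpow]
    exact hcong _ _ (by simp)
  let f : DihedralGroup m → G := fun x => match x with
    | DihedralGroup.r i => e i
    | DihedralGroup.sr i => η * e i
  have hf : ∀ x y, f (x * y) = f x * f y := by
    rintro (i | i) (j | j)
    · simp only [DihedralGroup.r_mul_r, f, hadd]
    · simp only [DihedralGroup.r_mul_sr, f]
      rw [← mul_assoc, hηe, sub_eq_add_neg, add_comm, hadd, hneg, mul_assoc]
    · simp only [DihedralGroup.sr_mul_r, f, hadd, mul_assoc]
    · simp only [DihedralGroup.sr_mul_sr, f]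
      rw [mul_assoc, ← mul_assoc (e i), hηe, mul_assoc, ← mul_assoc, hsq, one_mul, sub_eq_add_neg, add_comm, hadd, hneg]
  have hsurj : Function.Surjective f := by
    intro g
    by_cases hg : g ∈ A
    · obtain ⟨i, hi⟩ := hsurjA ⟨g, hg⟩
      exact ⟨DihedralGroup.r i, hi⟩
    · obtain ⟨i, hi⟩ := hsurjA ⟨η⁻¹ * g, hidx g hg⟩
      exact ⟨DihedralGroup.sr i, by simp only [f]; rw [hi]; simp⟩
  have hcardG : Nat.card G = 2 * m := by
    rw [← A.index_mul_card, Subgroup.index_eq_two_iff.mpr]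
    refine ⟨η, ?_⟩
    intro b
    by_cases hb : b ∈ A
    · right
      refine ⟨hb, fun h => hηA ?_⟩
      exact (A.mul_mem_cancel_left hb).mp h
    · left
      refine ⟨?_, hb⟩
      have := hidx b⁻¹ (fun h => hb (A.inv_mem_iff.mp h))
      have := A.inv_mem this
      simpa using this
  have hinj : Function.Injective f := by
    have hb : Function.Bijective f := by
      apply (Nat.bijective_iff_surjective_and_card f).mpr
      exact ⟨hsurj, by rw [DihedralGroup.nat_card, hcardG]⟩
    exact hb.1
  exact ⟨(MulEquiv.ofBijective (MonoidHom.mk' f hf) ⟨hinj, hsurj⟩).symm⟩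

end Davenport6

section Davenport7
universe u
open scoped IsMulCommutative

theorem pgroup_cyclic (p : ℕ) [hp : Fact p.Prime] : ∀ n : ℕ, ∀ (G : Type u) [Group G] [Finite G],
    Nat.card G = p ^ n → HasFull G → IsCyclic G := by
  intro n
  induction n with
  | zero =>
    intro G _ _ hc h
    have : Subsingleton G := (Nat.card_eq_one_iff_unique.mp (by simpa using hc)).1
    infer_instance
  | succ n ih =>
    intro G _ _ hc h
    obtain ⟨M, hM⟩ := Sylow.exists_subgroup_card_pow_prime (G := G) p (n := n)
      (by rw [hc]; exact pow_dvd_pow _ (Nat.le_succ n))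
    have hidx : M.index = p := by
      have h1 := M.card_mul_index
      rw [hM, hc, pow_succ] at h1
      exact Nat.eq_of_mul_eq_mul_left (pow_pos hp.out.pos n) h1
    have hnorm : M.Normal := by
      apply Subgroup.normal_of_index_eq_minFac_card
      rw [hidx, hc, Nat.Prime.pow_minFac hp.out (Nat.succ_ne_zero n)]
    have hcyc : IsCyclic M := ih M hM (h.subgroup M)
    have hcM : ∀ a ∈ M, ∀ b ∈ M, a * b = b * a := by
      intro a ha b hb
      obtain ⟨g, hg⟩ := hcyc.exists_generator
      obtain ⟨i, hi⟩ := hg ⟨a, ha⟩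
      obtain ⟨j, hj⟩ := hg ⟨b, hb⟩
      have h1 : (⟨a, ha⟩ : M) * ⟨b, hb⟩ = ⟨b, hb⟩ * ⟨a, ha⟩ := by
        rw [← hi, ← hj]
        exact ((Commute.refl g).zpow_zpow i j)
      exact congrArg Subtype.val h1
    have hcM' : IsMulCommutative M := .of_setLike_mul_comm fun a ha b hb => hcM a ha b hb
    have hle : M ≤ Subgroup.centralizer (M : Set G) := by
      intro a ha
      rw [Subgroup.mem_centralizer_iff]
      intro b hb
      exact hcM b hb a ha
    have hmul := Subgroup.relIndex_mul_index hle
    rw [hidx] at hmul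
    rcases (Nat.Prime.eq_one_or_self_of_dvd hp.out _ (Dvd.intro _ hmul)) with h1 | h1
    · have hself : Subgroup.centralizer (M : Set G) ≤ M := Subgroup.relIndex_eq_one.mp h1
      have hne : M ≠ ⊤ := by
        rintro rfl
        rw [Subgroup.index_top] at hidx
        exact hp.out.one_lt.ne hidx
      obtain ⟨m, hodd, hm3, ⟨e⟩⟩ := core (A := M) h
        (fun g hg => hself (by
          rw [Subgroup.mem_centralizer_iff]
          intro b hb
          exact (hg b hb).symm)) hne
      have hcard := Nat.card_congr e.toEquiv
      rw [hc, DihedralGroup.nat_card] at hcard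
      exfalso
      have hp2 : p = 2 := by
        have : 2 ∣ p ^ (n+1) := ⟨m, hcard⟩
        exact ((Nat.prime_dvd_prime_iff_eq Nat.prime_two hp.out).mp
          (Nat.prime_two.dvd_of_dvd_pow this)).symm
      have hmd : m ∣ 2 ^ (n+1) := by rw [← hp2]; exact ⟨2, by rw [hcard, mul_comm]⟩
      have hcop : Nat.Coprime m (2^(n+1)) := Nat.Coprime.pow_right _ (Nat.coprime_two_right.mpr hodd)
      have := Nat.Coprime.eq_one_of_dvd hcop hmd
      omega
    · rw [h1] at hmul
      have hi : (Subgroup.centralizer (M : Set G)).index = 1 := by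
        have : p * (Subgroup.centralizer (M : Set G)).index = p * 1 := by rw [hmul, mul_one]
        exact Nat.eq_of_mul_eq_mul_left hp.out.pos this
      rw [Subgroup.index_eq_one] at hi
      have hcen : M ≤ Subgroup.center G := by
        intro a ha
        rw [Subgroup.mem_center_iff]
        intro g
        have : g ∈ Subgroup.centralizer (M : Set G) := by rw [hi]; trivial
        rw [Subgroup.mem_centralizer_iff] at this
        exact (this a ha).symm
      have : IsCyclic (G ⧸ M) := isCyclic_of_prime_card (p := p) (by
        rw [← hidx]; rfl)
      exact cyclic_of_comm (commutative_of_cyclic_center_quotient (QuotientGroup.mk' M)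
        (by rw [QuotientGroup.ker_mk']; exact hcen)) h

theorem forward {G : Type u} [Group G] [Finite G] (h : HasFull G) :
    IsCyclic G ∨ ∃ n : ℕ, Odd n ∧ 3 ≤ n ∧ Nonempty (G ≃* DihedralGroup n) := by
  by_cases hcomm : ∀ x y : G, x * y = y * x
  · exact Or.inl (cyclic_of_comm hcomm h)
  right
  have hZ : IsZGroup G := ⟨fun p hp P => by
    have : Fact p.Prime := ⟨hp⟩
    obtain ⟨n, hn⟩ := IsPGroup.iff_card.mp P.isPGroup'
    exact pgroup_cyclic p n P hn (h.subgroup P)⟩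
  have hcyc : IsCyclic (commutator G) := IsZGroup.isCyclic_commutator G
  have hcC : ∀ a ∈ commutator G, ∀ b ∈ commutator G, a * b = b * a := by
    intro a ha b hb
    obtain ⟨g, hg⟩ := hcyc.exists_generator
    obtain ⟨i, hi⟩ := hg ⟨a, ha⟩
    obtain ⟨j, hj⟩ := hg ⟨b, hb⟩
    have h1 : (⟨a, ha⟩ : commutator G) * ⟨b, hb⟩ = ⟨b, hb⟩ * ⟨a, ha⟩ := by
      rw [← hi, ← hj]
      exact ((Commute.refl g).zpow_zpow i j)
    exact congrArg Subtype.val h1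
  obtain ⟨A, hA1, hA2⟩ := (Set.toFinite {K : Subgroup G | commutator G ≤ K ∧
    ∀ a ∈ K, ∀ b ∈ K, a * b = b * a}).exists_le_maximal (a := commutator G) ⟨le_rfl, hcC⟩
  have hAc := hA2.prop.2
  have hn : A.Normal := Subgroup.Normal.of_commutator_le G hA1
  have hAm : IsMulCommutative A := .of_setLike_mul_comm fun a ha b hb => hAc a ha b hb
  refine core (A := A) h ?_ ?_
  · intro g hg
    have hcl := Subgroup.isMulCommutative_closure (k := insert g (A : Set G)) (by
      rintro x (rfl | hx) y (rfl | hy)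
      · rfl
      · exact hg y hy
      · exact (hg x hx).symm
      · exact hAc x hx y hy)
    have hle : A ≤ Subgroup.closure (insert g (A : Set G)) := fun a ha =>
      Subgroup.subset_closure (Set.mem_insert_of_mem _ ha)
    have hmem : Subgroup.closure (insert g (A : Set G)) ∈ {K : Subgroup G | commutator G ≤ K ∧
        ∀ a ∈ K, ∀ b ∈ K, a * b = b * a} := ⟨hA1.trans hle, fun a ha b hb => setLike_mul_comm ha hb⟩
    exact hA2.le_of_ge hmem hle (Subgroup.subset_closure (Set.mem_insert _ _))
  · rintro rfl
    exact hcomm fun x y => hAc x trivial y trivial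

end Davenport7

section Davenport8

theorem atom_card_le {G : Type*} [Group G] [Finite G] {S : Multiset G} (hS : IsPOAtom S) :
    Multiset.card S ≤ Nat.card G := by
  obtain ⟨l, hl, h1⟩ := hS.1
  have hc : Multiset.card S = l.length := by rw [← hl]; rfl
  rw [hc]
  have hinj : Function.Injective (fun i : Fin l.length => (l.take i).prod) := by
    intro i j hij
    by_contra hne
    rcases lt_or_gt_of_ne (Fin.val_ne_of_ne hne) with hlt | hlt
    · exact prefix_ne hS l hl h1 i j hlt j.2 hij
    · exact prefix_ne hS l hl h1 j i hlt i.2 hij.symm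
  simpa using Nat.card_le_card_of_injective _ hinj

theorem largeD_iff {G : Type*} [Group G] [Fintype G] :
    largeD G = Fintype.card G ↔ HasFull G := by
  rw [← Nat.card_eq_fintype_card]
  have hb : BddAbove {n : ℕ | ∃ S : Multiset G, IsPOAtom S ∧ Multiset.card S = n} := by
    refine ⟨Nat.card G, ?_⟩
    rintro n ⟨S, hS, rfl⟩
    exact atom_card_le hS
  have hne : {n : ℕ | ∃ S : Multiset G, IsPOAtom S ∧ Multiset.card S = n}.Nonempty := by
    refine ⟨1, {1}, ⟨⟨[1], rfl, by simp⟩, by simp, ?_⟩, by simp⟩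
    intro T₁ T₂ _ _ h
    have := congrArg Multiset.card h
    rw [Multiset.card_add, Multiset.card_singleton] at this
    rw [← Multiset.card_eq_zero, ← Multiset.card_eq_zero]
    omega
  constructor
  · intro h
    have := Nat.sSup_mem hne hb
    change largeD G ∈ _ at this
    rw [h] at this
    exact this
  · intro h
    apply le_antisymm
    · apply csSup_le hne
      rintro n ⟨S, hS, rfl⟩
      exact atom_card_le hS
    · exact le_csSup hb h

theorem hasFull_cyclic {G : Type*} [Group G] [Finite G] [IsCyclic G] : HasFull G := by
  obtain ⟨g, hg⟩ := IsCyclic.exists_ofOrder_eq_natCard (α := G)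
  have hpos : 0 < Nat.card G := Nat.card_pos
  have key : ∀ T : Multiset G, (∀ x ∈ T, x = g) → IsProductOne T → Nat.card G ∣ Multiset.card T := by
    intro T hT ⟨l, hl, h1⟩
    have : l = List.replicate l.length g := List.eq_replicate_iff.mpr
      ⟨rfl, fun b hb => hT b (by rw [← hl]; exact hb)⟩
    rw [this, List.prod_replicate] at h1
    rw [← hl, ← hg]
    exact orderOf_dvd_of_pow_eq_one h1
  refine ⟨Multiset.replicate (Nat.card G) g, ⟨⟨List.replicate (Nat.card G) g, Multiset.coe_replicate _ _, ?_⟩, ?_, ?_⟩,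
    by simp⟩
  · rw [List.prod_replicate, ← hg, pow_orderOf_eq_one]
  · rw [Ne, ← Multiset.card_eq_zero, Multiset.card_replicate]
    exact hpos.ne'
  · intro T₁ T₂ h1 h2 h
    have hm : ∀ x ∈ T₁ + T₂, x = g := by
      rw [h]; intro x hx; exact Multiset.eq_of_mem_replicate hx
    have hc := congrArg Multiset.card h
    rw [Multiset.card_add, Multiset.card_replicate] at hc
    obtain ⟨a, ha⟩ := key T₁ (fun x hx => hm x (Multiset.mem_add.mpr (Or.inl hx))) h1
    by_cases h0 : T₁ = 0
    · exact Or.inl h0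
    right
    rw [← Multiset.card_eq_zero] at h0 ⊢
    have := Nat.le_of_dvd (Nat.pos_of_ne_zero h0) ⟨a, ha⟩
    omega

theorem dih_list (n : ℕ) [DecidableEq (DihedralGroup n)] (hn : (1 : ZMod n) ≠ 0) :
    ∀ l : List (DihedralGroup n),
    (∀ g ∈ l, g = DihedralGroup.sr 0 ∨ g = DihedralGroup.sr 1) →
    ∃ x y : ℕ, x + y = l.count (DihedralGroup.sr 1) ∧ 2 * x ≤ l.length + 1 ∧ 2 * y ≤ l.length ∧
      ((Even l.length ∧ l.prod = DihedralGroup.r ((y : ZMod n) - (x : ZMod n))) ∨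
       (¬ Even l.length ∧ l.prod = DihedralGroup.sr ((x : ZMod n) - (y : ZMod n)))) := by
  intro l
  induction l with
  | nil => intro _; exact ⟨0, 0, by simp, by simp, by simp, Or.inl ⟨by simp, by simp⟩⟩
  | cons g l ih =>
    intro h
    obtain ⟨x, y, hxy, hx, hy, hp⟩ := ih fun g hg => h g (List.mem_cons_of_mem _ hg)
    obtain ⟨i, hi, hgi⟩ : ∃ i : ℕ, (i = 0 ∧ g ≠ DihedralGroup.sr 1 ∨ i = 1 ∧ g = DihedralGroup.sr 1) ∧
        g = DihedralGroup.sr (i : ZMod n) := by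
      rcases h g List.mem_cons_self with rfl | rfl
      · refine ⟨0, Or.inl ⟨rfl, ?_⟩, by simp⟩
        intro h'
        injection h' with h'
        exact hn h'.symm
      · exact ⟨1, Or.inr ⟨rfl, rfl⟩, by simp⟩
    refine ⟨i + y, x, ?_, ?_, ?_, ?_⟩
    · rcases hi with ⟨rfl, hi⟩ | ⟨rfl, hi⟩
      · rw [List.count_cons_of_ne hi]; omega
      · rw [hi, List.count_cons_self]; omega
    · rw [List.length_cons]; omega
    · rw [List.length_cons]; omega
    · rw [List.length_cons, List.prod_cons, hgi, Nat.even_add_one]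
      rcases hp with ⟨he, hp⟩ | ⟨he, hp⟩
      · right
        refine ⟨not_not.mpr he, ?_⟩
        rw [hp, DihedralGroup.sr_mul_r]
        congr 1
        push_cast
        ring
      · left
        refine ⟨he, ?_⟩
        rw [hp, DihedralGroup.sr_mul_sr]
        congr 1
        push_cast
        ring

theorem hasFull_dihedral {n : ℕ} (hodd : Odd n) (hn : 3 ≤ n) : HasFull (DihedralGroup n) := by
  have : Fact (1 < n) := ⟨by omega⟩
  have h10 : (1 : ZMod n) ≠ 0 := one_ne_zero
  let s0 : DihedralGroup n := .sr 0
  let s1 : DihedralGroup n := .sr 1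
  have hs01 : s0 ≠ s1 := by
    intro h'
    injection h' with h'
    exact h10 h'.symm
  have key : ∀ T : Multiset (DihedralGroup n), (∀ g ∈ T, g = s0 ∨ g = s1) → IsProductOne T →
      T.count s1 ≤ n → Odd (T.count s1) → 2 * n ≤ Multiset.card T := by
    intro T hT ⟨l, hl, h1⟩ hle ho
    obtain ⟨x, y, hxy, hx, hy, hp⟩ := dih_list n h10 l (fun g hg => hT g (by rw [← hl]; exact hg))
    have hc : Multiset.card T = l.length := by rw [← hl]; rfl
    have hct : T.count s1 = l.count s1 := by rw [← hl]; exact Multiset.coe_count _ _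
    change x + y = l.count s1 at hxy
    rw [hct, ← hxy] at hle ho
    rw [hc]
    rcases hp with ⟨he, hp⟩ | ⟨he, hp⟩
    · rw [h1, DihedralGroup.one_def] at hp
      injection hp with hp
      have hz : (((y : ℤ) - x : ℤ) : ZMod n) = 0 := by push_cast; exact hp.symm
      rw [ZMod.intCast_zmod_eq_zero_iff_dvd] at hz
      have hne : (y : ℤ) - x ≠ 0 := by
        obtain ⟨k, hk⟩ := ho
        omega
      have := Int.le_of_dvd (abs_pos.mpr hne) ((dvd_abs _ _).mpr hz)
      obtain ⟨k, hk⟩ := he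
      rcases abs_cases ((y : ℤ) - x) with ⟨h2, _⟩ | ⟨h2, _⟩ <;> rw [h2] at this <;> omega
    · rw [h1, DihedralGroup.one_def] at hp
      cases hp
  refine ⟨Multiset.replicate n s0 + Multiset.replicate n s1, ⟨⟨(List.replicate n [s0, s1]).flatten, ?_, ?_⟩, ?_, ?_⟩, ?_⟩
  · have : ∀ k : ℕ, (((List.replicate k [s0, s1]).flatten : List _) : Multiset (DihedralGroup n)) =
        Multiset.replicate k s0 + Multiset.replicate k s1 := by
      intro k
      induction k with
      | zero => simp
      | succ k ih =>
        rw [List.replicate_succ, List.flatten_cons, ← Multiset.coe_add, ih,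
          Multiset.replicate_succ, Multiset.replicate_succ]
        have : (([s0, s1] : List _) : Multiset (DihedralGroup n)) = {s0} + {s1} := rfl
        rw [this, ← Multiset.singleton_add, ← Multiset.singleton_add]
        abel
    exact this n
  · rw [List.prod_flatten, List.map_replicate, List.prod_replicate]
    have : [s0, s1].prod = DihedralGroup.r 1 := by
      simp [s0, s1]
    rw [this, DihedralGroup.r_one_pow_n]
  · rw [Ne, ← Multiset.card_eq_zero]
    simp
    omega
  · intro T₁ T₂ h1 h2 h
    have hm : ∀ g ∈ T₁ + T₂, g = s0 ∨ g = s1 := by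
      rw [h]
      intro g hg
      rcases Multiset.mem_add.mp hg with hg | hg
      · exact Or.inl (Multiset.eq_of_mem_replicate hg)
      · exact Or.inr (Multiset.eq_of_mem_replicate hg)
    have hc := congrArg Multiset.card h
    rw [Multiset.card_add, Multiset.card_add, Multiset.card_replicate, Multiset.card_replicate] at hc
    have hct := congrArg (Multiset.count s1) h
    rw [Multiset.count_add, Multiset.count_add, Multiset.count_replicate_self,
      Multiset.count_replicate, if_neg hs01, zero_add] at hct
    rw [← Multiset.card_eq_zero, ← Multiset.card_eq_zero]
    rcases Nat.even_or_odd (T₁.count s1) with he | ho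
    · have ho : Odd (T₂.count s1) := by
        obtain ⟨a, ha⟩ := he
        obtain ⟨b, hb⟩ := hodd
        exact ⟨b - a, by omega⟩
      have := key T₂ (fun g hg => hm g (Multiset.mem_add.mpr (Or.inr hg))) h2 (by omega) ho
      omega
    · have := key T₁ (fun g hg => hm g (Multiset.mem_add.mpr (Or.inl hg))) h1 (by omega) ho
      omega
  · rw [DihedralGroup.nat_card]
    simp
    omega

theorem IsProductOne.map' {G H : Type*} [Group G] [Group H] (e : G →* H) {S : Multiset G}
    (h : IsProductOne S) : IsProductOne (S.map e) := by
  obtain ⟨l, rfl, h1⟩ := h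
  exact ⟨l.map e, by simp, by rw [← map_list_prod, h1, map_one]⟩

theorem HasFull.congr {G H : Type*} [Group G] [Group H] (e : G ≃* H) (h : HasFull G) :
    HasFull H := by
  obtain ⟨S, ⟨h1, h0, hat⟩, hc⟩ := h
  refine ⟨S.map e, ⟨h1.map' e.toMonoidHom, by simpa using h0, ?_⟩, ?_⟩
  · intro T₁ T₂ hT1 hT2 hT
    have := hat (T₁.map e.symm) (T₂.map e.symm) (hT1.map' e.symm.toMonoidHom)
      (hT2.map' e.symm.toMonoidHom) (by
        rw [← Multiset.map_add, hT, Multiset.map_map]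
        simp)
    simpa using this
  · rw [Multiset.card_map, hc, Nat.card_congr e.toEquiv]

end Davenport8

/-- For a finite group `G`, `D(G) = |G|` if and only if `G` is cyclic or isomorphic to a
dihedral group of order `2n` for some odd `n ≥ 3`. -/
theorem stmt15 {G : Type*} [Group G] [Fintype G] :
    largeD G = Fintype.card G ↔
      (IsCyclic G ∨ ∃ n : ℕ, Odd n ∧ 3 ≤ n ∧ Nonempty (G ≃* DihedralGroup n)) := by
  rw [largeD_iff]
  constructor
  · exact forward
  · rintro (h | ⟨n, hodd, hn, ⟨e⟩⟩)
    · exact hasFull_cyclic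
    · exact (hasFull_dihedral hodd hn).congr e.symm
end

section
/- Let G be a cyclic group of order n ≥ 3 and let ℓ be an integer with ⌊n/2⌋ + 2 ≤ ℓ ≤ n. Then the number of minimal zero-sum sequences over G of length ℓ equals Φ(n)·p_ℓ(n), where Φ(n) is Euler's totient function and p_ℓ(n) is the number of partitions of n into ℓ positive integer summands. -/
/-- `S` is a minimal zero-sum sequence over the additive abelian group `G`: a nontrivial
zero-sum sequence no proper nontrivial subsequence of which has sum zero. -/
def IsMinimalZeroSum {G : Type*} [AddCommGroup G] (S : Multiset G) : Prop :=
  S.sum = 0 ∧ S ≠ 0 ∧ ∀ T : Multiset G, T ≤ S → T ≠ 0 → T ≠ S → T.sum ≠ 0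

/-- set of subsums, the empty one included -/
def SubS {G : Type*} [AddCommGroup G] [DecidableEq G] (s : Multiset G) : Finset G :=
  (s.powerset.map Multiset.sum).toFinset

/-- no nonempty zero-sum subsequence -/
def ZFree {G : Type*} [AddCommGroup G] (s : Multiset G) : Prop :=
  ∀ t : Multiset G, t ≤ s → t ≠ 0 → t.sum ≠ 0

set_option linter.unusedSectionVars false

section aux
variable {G : Type*} [AddCommGroup G] [DecidableEq G]

theorem mem_SubS {s : Multiset G} {x : G} : x ∈ SubS s ↔ ∃ t ≤ s, t.sum = x := by
  simp [SubS]

theorem SubS_cons (a : G) (s : Multiset G) :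
    SubS (a ::ₘ s) = SubS s ∪ (SubS s).image (fun x => x + a) := by
  ext x
  simp only [SubS, Multiset.powerset_cons, Multiset.map_add, Multiset.map_map, Multiset.toFinset_add,
    Finset.mem_union, Multiset.mem_toFinset, Multiset.mem_map, Finset.mem_image, Function.comp,
    Multiset.sum_cons]
  constructor
  · rintro (h | ⟨t, ht, rfl⟩)
    · exact Or.inl h
    · exact Or.inr ⟨t.sum, ⟨t, ht, rfl⟩, add_comm _ _⟩
  · rintro (h | ⟨_, ⟨t, ht, rfl⟩, rfl⟩)
    · exact Or.inl h
    · exact Or.inr ⟨t, ht, add_comm _ _⟩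

theorem zero_mem_SubS (s : Multiset G) : (0 : G) ∈ SubS s :=
  mem_SubS.2 ⟨0, Multiset.zero_le _, rfl⟩

theorem sum_mem_SubS (s : Multiset G) : s.sum ∈ SubS s := mem_SubS.2 ⟨s, le_rfl, rfl⟩

theorem SubS_mono {s t : Multiset G} (h : s ≤ t) : SubS s ⊆ SubS t := by
  intro x hx
  obtain ⟨u, hu, rfl⟩ := mem_SubS.1 hx
  exact mem_SubS.2 ⟨u, hu.trans h, rfl⟩

theorem SubS_symm {s : Multiset G} {x : G} (h : x ∈ SubS s) : s.sum - x ∈ SubS s := by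
  obtain ⟨u, hu, rfl⟩ := mem_SubS.1 h
  obtain ⟨w, rfl⟩ := Multiset.le_iff_exists_add.1 hu
  exact mem_SubS.2 ⟨w, Multiset.le_add_left _ _, by simp⟩

theorem ZFree.mono {s t : Multiset G} (h : s ≤ t) (ht : ZFree t) : ZFree s :=
  fun u hu => ht u (hu.trans h)

theorem ZFree.neg_notMem {s : Multiset G} {a : G} (h : ZFree (a ::ₘ s)) : -a ∉ SubS s := by
  intro hx
  obtain ⟨u, hu, hs⟩ := mem_SubS.1 hx
  exact h (a ::ₘ u) (Multiset.cons_le_cons a hu) (Multiset.cons_ne_zero) (by simp [hs])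

theorem ZFree.cons {s : Multiset G} {a : G} (h : ZFree s) (ha : -a ∉ SubS s) :
    ZFree (a ::ₘ s) := by
  intro t ht h0 hs
  by_cases hat : a ∈ t
  · obtain ⟨u, rfl⟩ := Multiset.exists_cons_of_mem hat
    refine ha (mem_SubS.2 ⟨u, (Multiset.cons_le_cons_iff a).1 ht, ?_⟩)
    rw [Multiset.sum_cons] at hs
    exact (neg_eq_of_add_eq_zero_right hs).symm
  · exact h t ((Multiset.le_cons_of_notMem hat).1 ht) h0 hs

theorem card_SubS_cons {s : Multiset G} {a : G} (h : ZFree (a ::ₘ s)) :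
    (SubS s).card + 1 ≤ (SubS (a ::ₘ s)).card := by
  rw [SubS_cons]
  apply Nat.succ_le_of_lt
  apply Finset.card_lt_card
  rw [Finset.ssubset_iff_subset_ne]
  refine ⟨Finset.subset_union_left, fun he => ?_⟩
  have h1 : (SubS s).image (fun x => x + a) ⊆ SubS s := by
    rw [he.symm.symm]
    conv_rhs => rw [he]
    exact Finset.subset_union_right
  have h2 : (SubS s).image (fun x => x + a) = SubS s := by
    apply Finset.eq_of_subset_of_card_le h1
    rw [Finset.card_image_of_injective _ (add_left_injective a)]
  have h3 := zero_mem_SubS s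
  rw [← h2] at h3
  obtain ⟨x, hx, hxa⟩ := Finset.mem_image.1 h3
  apply h.neg_notMem
  rwa [← eq_neg_of_add_eq_zero_left hxa]

theorem card_SubS {s : Multiset G} (h : ZFree s) : s.card + 1 ≤ (SubS s).card := by
  induction s using Multiset.induction_on with
  | empty => simp [SubS]
  | cons a s ih =>
    have := ih (h.mono (Multiset.le_cons_self s a))
    have := card_SubS_cons h
    simp; omega

theorem one_step {s : Multiset G} {a : G} (h : ZFree (a ::ₘ s))
    (hc : (SubS (a ::ₘ s)).card ≤ (SubS s).card + 1) :
    s.sum + a ∉ SubS s ∧ ∀ x ∈ SubS s, x ≠ s.sum → x + a ∈ SubS s := by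
  have h1 : s.sum + a ∉ SubS s := by
    intro hh
    have := SubS_symm hh
    apply h.neg_notMem
    simpa using this
  refine ⟨h1, fun x hx hne => ?_⟩
  by_contra hxa
  have : insert (x + a) (insert (s.sum + a) (SubS s)) ⊆ SubS (a ::ₘ s) := by
    rw [SubS_cons]
    intro y hy
    simp only [Finset.mem_insert] at hy
    simp only [Finset.mem_union, Finset.mem_image]
    rcases hy with rfl | rfl | hy
    · exact Or.inr ⟨x, hx, rfl⟩
    · exact Or.inr ⟨_, sum_mem_SubS s, rfl⟩
    · exact Or.inl hy
  have := Finset.card_le_card this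
  rw [Finset.card_insert_of_notMem (by simp [hne, hxa]), Finset.card_insert_of_notMem h1] at this
  omega

theorem max_ext {α β₀ : Multiset G} (hα : ZFree α) (hc : (SubS α).card < 2 * α.card)
    (hle : β₀ ≤ α) (h0 : β₀ ≠ 0) (hb : 2 * β₀.card ≤ (SubS β₀).card) :
    ∃ (β : Multiset G) (a : G) (r : ℕ), β₀ ≤ β ∧ α = Multiset.replicate (r + 1) a + β ∧
      ∀ x ∈ SubS β, x ≠ β.sum → x + a ∈ SubS β := by
  let F := α.powerset.toFinset.filter (fun β => β₀ ≤ β ∧ 2 * β.card ≤ (SubS β).card)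
  have hF : F.Nonempty := ⟨β₀, by simp [F, hle, hb]⟩
  obtain ⟨β, hβ, hmax⟩ := Finset.exists_max_image F Multiset.card hF
  simp only [F, Finset.mem_filter, Multiset.mem_toFinset, Multiset.mem_powerset] at hβ hmax
  obtain ⟨hβα, hβ0, hβc⟩ := hβ
  obtain ⟨γ, rfl⟩ := Multiset.le_iff_exists_add.1 hβα
  have key : ∀ a ∈ γ, β.sum + a ∉ SubS β ∧ ∀ x ∈ SubS β, x ≠ β.sum → x + a ∈ SubS β := by
    intro a ha
    have hle' : a ::ₘ β ≤ β + γ := by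
      obtain ⟨δ, rfl⟩ := Multiset.exists_cons_of_mem ha
      rw [Multiset.add_cons]
      exact Multiset.cons_le_cons a (Multiset.le_add_right _ _)
    apply one_step (hα.mono hle')
    by_contra hcon
    have := hmax (a ::ₘ β) ⟨hle', hβ0.trans (Multiset.le_cons_self _ _), by simp; omega⟩
    simp at this
  have hγ : γ ≠ 0 := by
    rintro rfl
    simp at hc; omega
  obtain ⟨a, ha⟩ := Multiset.exists_mem_of_ne_zero hγ
  have hβne : β ≠ 0 := by
    rintro rfl
    exact h0 (Multiset.le_zero.1 hβ0)
  have hsum : (0 : G) ≠ β.sum := (hα β hβα hβne).symm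
  have hall : ∀ c ∈ γ, c = a := by
    intro c hcγ
    by_contra hne
    obtain ⟨h1, h2⟩ := key a ha
    obtain ⟨h3, h4⟩ := key c hcγ
    have ha0 : a ≠ 0 := by
      rintro rfl
      exact h1 (by simpa using sum_mem_SubS β)
    have haA : a ∈ SubS β := by simpa using h2 0 (zero_mem_SubS β) hsum
    have h5 := SubS_symm haA
    have h6 := h4 _ h5 (by simpa using ha0)
    have h7 := h2 _ h6 (by
      intro h
      apply hne
      rw [sub_add_eq_add_sub, sub_eq_iff_eq_add] at h
      exact add_left_cancel h)
    apply h3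
    have : β.sum - a + c + a = β.sum + c := by abel
    rwa [this] at h7
  have hrep := Multiset.eq_replicate_card.2 hall
  have hpos : 0 < γ.card := Multiset.card_pos.2 hγ
  refine ⟨β, a, γ.card - 1, hβ0, ?_, (key a ha).2⟩
  rw [Nat.sub_add_cancel hpos, ← hrep, add_comm]

theorem prog_replicate {β : Multiset G} {a : G} (h : ∀ x ∈ SubS β, x ≠ β.sum → x + a ∈ SubS β)
    (r : ℕ) : ∀ x ∈ SubS (Multiset.replicate r a + β), x ≠ (Multiset.replicate r a + β).sum →
      x + a ∈ SubS (Multiset.replicate r a + β) := by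
  induction r with
  | zero => simpa using h
  | succ r ih =>
    intro x hx hne
    rw [Multiset.replicate_succ, Multiset.cons_add] at *
    rw [SubS_cons, Finset.mem_union] at hx ⊢
    rcases hx with hx | hx
    · exact Or.inr (Finset.mem_image_of_mem _ hx)
    · obtain ⟨y, hy, rfl⟩ := Finset.mem_image.1 hx
      refine Or.inr (Finset.mem_image_of_mem _ (ih y hy ?_))
      rintro rfl
      apply hne
      rw [Multiset.sum_cons, add_comm]

theorem eq_neg_sum {β : Multiset G} {a : G} (h : ∀ x ∈ SubS β, x ≠ β.sum → x + a ∈ SubS β)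
    (r : ℕ) (hz : ZFree (Multiset.replicate (r + 1) a + β))
    (hfull : ∀ x, x ∈ SubS (Multiset.replicate (r + 1) a + β)) :
    a = - (Multiset.replicate (r + 1) a + β).sum := by
  have h1 := prog_replicate h r
  rw [Multiset.replicate_succ, Multiset.cons_add] at *
  have h2 := hfull (-a)
  rw [SubS_cons, Finset.mem_union] at h2
  rcases h2 with h2 | h2
  · exact absurd h2 hz.neg_notMem
  · obtain ⟨y, hy, hya⟩ := Finset.mem_image.1 h2
    by_cases hys : y = (Multiset.replicate r a + β).sum
    · rw [Multiset.sum_cons, ← hys, add_comm a, hya, neg_neg]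
    · have := h1 y hy hys
      rw [hya] at this
      exact absurd this hz.neg_notMem

theorem SubS_replicate {v : ℕ} {a : G} :
    SubS (Multiset.replicate v a) = (Finset.range (v + 1)).image (fun i => i • a) := by
  ext x
  rw [mem_SubS]
  simp only [Multiset.le_replicate_iff, Finset.mem_image, Finset.mem_range]
  constructor
  · rintro ⟨t, ⟨k, hk, rfl⟩, rfl⟩
    exact ⟨k, by omega, by simp⟩
  · rintro ⟨k, hk, rfl⟩
    exact ⟨Multiset.replicate k a, ⟨k, by omega, rfl⟩, by simp⟩

theorem max_case [Fintype G] {α : Multiset G} (hα : ZFree α) (hc : Fintype.card G < 2 * α.card)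
    (hfull : ∀ x, x ∈ SubS α) :
    ∃ a : G, ∀ b ∈ α, ∃ x : ℕ, 1 ≤ x ∧ x ≤ α.count a ∧ b = x • a := by
  have hc' : (SubS α).card < 2 * α.card := lt_of_le_of_lt (Finset.card_le_univ _) hc
  have hne : α ≠ 0 := by rintro rfl; simp at hc
  have huniq : ∀ β₀ ≤ α, β₀ ≠ 0 → 2 * β₀.card ≤ (SubS β₀).card → β₀.count (-α.sum) < α.count (-α.sum) := by
    intro β₀ hle h0 hb
    obtain ⟨β, a, r, h1, h2, h3⟩ := max_ext hα hc' hle h0 hb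
    rw [h2] at hα hfull
    have h4 := eq_neg_sum h3 r hα hfull
    rw [← h2] at h4
    rw [← h4]
    have := Multiset.count_le_of_le a h1
    rw [h2]
    simp
    omega
  refine ⟨-α.sum, fun b hb => ?_⟩
  generalize -α.sum = a at huniq
  have hvle : Multiset.replicate (α.count a) a ≤ α := Multiset.le_count_iff_replicate_le.1 le_rfl
  set v := α.count a with hv
  have hb0 : b ≠ 0 := by
    have := hα {b} (by simpa using hb) (by simp)
    simpa using this
  by_cases hba : b = a
  · refine ⟨1, le_rfl, ?_, by simp [hba]⟩
    rw [hv, ← hba]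
    exact Multiset.count_pos.2 hb
  have hle : b ::ₘ Multiset.replicate v a ≤ α := by
    obtain ⟨δ, rfl⟩ := Multiset.exists_cons_of_mem hb
    apply Multiset.cons_le_cons
    rw [← Multiset.le_count_iff_replicate_le, hv, Multiset.count_cons_of_ne (Ne.symm hba)]
  by_contra hcon
  push Not at hcon
  have hz := hα.mono hle
  have := huniq _ hle (Multiset.cons_ne_zero) (by
    rw [SubS_cons, Finset.card_union_of_disjoint, Finset.card_image_of_injective _ (add_left_injective b)]
    · have := card_SubS (hα.mono hvle)
      simp at this ⊢
      omega
    · rw [Finset.disjoint_left]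
      intro x hx hx'
      obtain ⟨y, hy, rfl⟩ := Finset.mem_image.1 hx'
      rw [SubS_replicate] at hx hy
      obtain ⟨i, hi, hi'⟩ := Finset.mem_image.1 hx
      obtain ⟨j, hj, rfl⟩ := Finset.mem_image.1 hy
      simp only [Finset.mem_range] at hi hj
      rcases le_or_gt i j with hij | hij
      · apply hz.neg_notMem
        rw [SubS_replicate, Finset.mem_image]
        refine ⟨j - i, by simp; omega, ?_⟩
        obtain ⟨k, rfl⟩ := Nat.exists_eq_add_of_le hij
        rw [add_smul, add_assoc] at hi'
        have : k • a + b = 0 := by simpa using hi'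
        simp [eq_neg_of_add_eq_zero_left this]
      · obtain ⟨k, rfl⟩ := Nat.exists_eq_add_of_lt hij
        refine hcon (k + 1) (by omega) (by omega) ?_
        rw [add_assoc, add_smul] at hi'
        exact (add_left_cancel hi').symm)
  rw [Multiset.count_cons_of_ne (Ne.symm hba)] at this
  simp at this

theorem lift_sum [Fintype G] {a : G} {v : ℕ} (m : Multiset ℕ)
    (hm : ∀ x ∈ m, 1 ≤ x ∧ x ≤ v) (hz : ZFree (m.map (fun x => x • a) + Multiset.replicate v a)) :
    m.sum + v < Fintype.card G ∧
      ∀ i ≤ m.sum + v, i • a ∈ SubS (m.map (fun x => x • a) + Multiset.replicate v a) := by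
  induction m using Multiset.induction_on with
  | empty =>
    simp at hz ⊢
    refine ⟨?_, ?_⟩
    · have := card_SubS hz
      have := Finset.card_le_univ (SubS (Multiset.replicate v a))
      simp at *; omega
    · intro i hi
      rw [SubS_replicate, Finset.mem_image]
      exact ⟨i, by simp; omega, rfl⟩
  | cons x m ih =>
    rw [Multiset.map_cons, Multiset.cons_add] at hz ⊢
    obtain ⟨h1, h2⟩ := ih (fun y hy => hm y (Multiset.mem_cons_of_mem hy))
      (hz.mono (Multiset.le_cons_self _ _))
    have hx := hm x (Multiset.mem_cons_self _ _)
    rw [Multiset.sum_cons]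
    constructor
    · by_contra hcon
      apply hz.neg_notMem
      have h3 := h2 (Fintype.card G - x) (by omega)
      have h4 : (Fintype.card G - x) • a + x • a = 0 := by
        rw [← add_smul, Nat.sub_add_cancel (by omega), card_nsmul_eq_zero]
      rwa [eq_neg_of_add_eq_zero_left h4] at h3
    · intro i hi
      rw [SubS_cons, Finset.mem_union]
      rcases le_or_gt i (m.sum + v) with h | h
      · exact Or.inl (h2 i h)
      · refine Or.inr (Finset.mem_image.2 ⟨(i - x) • a, h2 _ (by omega), ?_⟩)
        rw [← add_smul, Nat.sub_add_cancel (by omega)]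

theorem exists_lift {a : G} (P : ℕ → Prop) (s : Multiset G) (h : ∀ b ∈ s, ∃ x : ℕ, P x ∧ b = x • a) :
    ∃ m : Multiset ℕ, (∀ x ∈ m, P x) ∧ m.map (fun x => x • a) = s := by
  induction s using Multiset.induction_on with
  | empty => exact ⟨0, by simp, by simp⟩
  | cons b s ih =>
    obtain ⟨m, h1, h2⟩ := ih (fun c hc => h c (Multiset.mem_cons_of_mem hc))
    obtain ⟨x, hx, rfl⟩ := h b (Multiset.mem_cons_self _ _)
    refine ⟨x ::ₘ m, ?_, by simp [h2]⟩
    intro y hy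
    rcases Multiset.mem_cons.1 hy with rfl | hy
    · exact hx
    · exact h1 y hy

theorem exists_full [Fintype G] {s : Multiset G} (hs : ZFree s) :
    ∃ t, s ≤ t ∧ ZFree t ∧ ∀ x, x ∈ SubS t := by
  obtain ⟨k, hk⟩ : ∃ k, Fintype.card G - s.card = k := ⟨_, rfl⟩
  induction k using Nat.strong_induction_on generalizing s with
  | _ k ih =>
    by_cases h : ∀ x, x ∈ SubS s
    · exact ⟨s, le_rfl, hs, h⟩
    · push Not at h
      obtain ⟨x, hx⟩ := h
      have h1 : ZFree (-x ::ₘ s) := hs.cons (by simpa using hx)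
      have h2 := card_SubS h1
      have h3 := Finset.card_le_univ (SubS (-x ::ₘ s))
      have h4 : Multiset.card (-x ::ₘ s) = s.card + 1 := by simp
      obtain ⟨t, h5, h6, h7⟩ := ih (Fintype.card G - Multiset.card (-x ::ₘ s)) (by omega) h1 rfl
      exact ⟨t, (Multiset.le_cons_self _ _).trans h5, h6, h7⟩

theorem exists_of_le_map {f : ℕ → G} (M : Multiset ℕ) :
    ∀ T : Multiset G, T ≤ M.map f → ∃ M' ≤ M, M'.map f = T := by
  induction M using Multiset.induction_on with
  | empty =>
    intro T hT
    refine ⟨0, le_rfl, ?_⟩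
    simpa [eq_comm] using hT
  | cons x M ih =>
    intro T hT
    rw [Multiset.map_cons] at hT
    by_cases hx : f x ∈ T
    · obtain ⟨u, rfl⟩ := Multiset.exists_cons_of_mem hx
      obtain ⟨M', h1, h2⟩ := ih u ((Multiset.cons_le_cons_iff _).1 hT)
      exact ⟨x ::ₘ M', Multiset.cons_le_cons _ h1, by simp [h2]⟩
    · obtain ⟨M', h1, h2⟩ := ih T ((Multiset.le_cons_of_notMem hx).1 hT)
      exact ⟨M', h1.trans (Multiset.le_cons_self _ _), h2⟩

theorem savchev_chen [Fintype G] {s : Multiset G} (hs : ZFree s)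
    (hc : Fintype.card G < 2 * s.card) :
    ∃ (a : G) (m : Multiset ℕ), (∀ x ∈ m, 0 < x) ∧ m.sum < Fintype.card G ∧
      m.map (fun x => x • a) = s := by
  obtain ⟨t, hst, ht, hfull⟩ := exists_full hs
  have hct : s.card ≤ t.card := Multiset.card_le_card hst
  obtain ⟨a, ha⟩ := max_case ht (by omega) hfull
  have hsplit : t = t.filter (fun b => b ≠ a) + Multiset.replicate (t.count a) a := by
    conv_lhs => rw [← Multiset.filter_add_not (fun b => b ≠ a) t]
    congr 1
    rw [← Multiset.filter_eq']
    simp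
  obtain ⟨m, hm1, hm2⟩ := exists_lift (a := a) (fun x => 1 ≤ x ∧ x ≤ t.count a)
    (t.filter (fun b => b ≠ a)) (by
      intro b hb
      obtain ⟨x, h1, h2, h3⟩ := ha b (Multiset.mem_filter.1 hb).1
      exact ⟨x, ⟨h1, h2⟩, h3⟩)
  have h1 := (lift_sum m hm1 (by rw [hm2, ← hsplit]; exact ht)).1
  have hM : (m + Multiset.replicate (t.count a) 1).map (fun x => x • a) = t := by
    rw [Multiset.map_add, hm2, Multiset.map_replicate, one_smul, ← hsplit]
  rw [← hM] at hst
  obtain ⟨M', h2, h3⟩ := exists_of_le_map _ _ hst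
  refine ⟨a, M', ?_, ?_, h3⟩
  · intro x hx
    rcases Multiset.mem_add.1 (Multiset.mem_of_le h2 hx) with h | h
    · exact (hm1 x h).1
    · rw [Multiset.eq_of_mem_replicate h]; exact one_pos
  · obtain ⟨w, hw⟩ := Multiset.le_iff_exists_add.1 h2
    have := congrArg Multiset.sum hw
    simp at this
    omega

theorem minimal_form [Fintype G] {n l : ℕ} (hn : Fintype.card G = n)
    (hl1 : n / 2 + 2 ≤ l) {S : Multiset G} (hS : IsMinimalZeroSum S) (hl : S.card = l) :
    ∃ (g : G) (m : Multiset ℕ), addOrderOf g = n ∧ (∀ x ∈ m, 0 < x) ∧ m.sum = n ∧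
      m.map (fun x => x • g) = S := by
  obtain ⟨h1, h2, h3⟩ := hS
  obtain ⟨b, hb⟩ := Multiset.exists_mem_of_ne_zero h2
  obtain ⟨s, rfl⟩ := Multiset.exists_cons_of_mem hb
  have hs : ZFree s := by
    intro t ht h0
    refine h3 t (ht.trans (Multiset.le_cons_self _ _)) h0 ?_
    rintro rfl
    have := Multiset.card_le_card ht
    simp at this
  rw [Multiset.card_cons] at hl
  obtain ⟨a, m, hm1, hm2, hm3⟩ := savchev_chen hs (by omega)
  have hord : addOrderOf a = n := by
    have hd : addOrderOf a ∣ n := hn ▸ addOrderOf_dvd_card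
    have hsub : SubS s ⊆ (Finset.range (addOrderOf a)).image (fun i => i • a) := by
      intro x hx
      obtain ⟨t, ht, rfl⟩ := mem_SubS.1 hx
      rw [← hm3] at ht
      obtain ⟨M', _, rfl⟩ := exists_of_le_map _ _ ht
      rw [← Multiset.sum_smul, Finset.mem_image]
      refine ⟨M'.sum % addOrderOf a, ?_, mod_addOrderOf_nsmul _ _⟩
      rw [Finset.mem_range]
      exact Nat.mod_lt _ (addOrderOf_pos a)
    have h4 := (Finset.card_le_card hsub).trans Finset.card_image_le
    have h5 := card_SubS hs
    rw [Finset.card_range] at h4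
    obtain ⟨c, hc⟩ := hd
    have : c < 2 := by
      by_contra hcon
      have : addOrderOf a * 2 ≤ addOrderOf a * c := Nat.mul_le_mul_left _ (by omega)
      omega
    have hpos := Fintype.card_pos (α := G)
    interval_cases c
    · omega
    · omega
  refine ⟨a, (n - m.sum) ::ₘ m, hord, ?_, ?_, ?_⟩
  · intro x hx
    rcases Multiset.mem_cons.1 hx with rfl | hx
    · omega
    · exact hm1 x hx
  · simp; omega
  · rw [Multiset.map_cons, hm3]
    congr 1
    rw [Multiset.sum_cons, ← hm3, ← Multiset.sum_smul] at h1
    rw [eq_neg_of_add_eq_zero_left h1]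
    apply eq_neg_of_add_eq_zero_left
    rw [← add_smul, Nat.sub_add_cancel (by omega), ← hn, card_nsmul_eq_zero]

theorem form_minimal {n : ℕ} {g : G} (hg : addOrderOf g = n) {m : Multiset ℕ} (hm0 : m ≠ 0)
    (hm : ∀ x ∈ m, 0 < x) (hsum : m.sum = n) : IsMinimalZeroSum (m.map (fun x => x • g)) := by
  refine ⟨?_, by simpa using hm0, ?_⟩
  · rw [← Multiset.sum_smul, hsum, ← hg, addOrderOf_nsmul_eq_zero]
  · intro T hT h0 hne hs
    obtain ⟨M, hM, rfl⟩ := exists_of_le_map _ _ hT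
    obtain ⟨w, rfl⟩ := Multiset.le_iff_exists_add.1 hM
    rw [← Multiset.sum_smul] at hs
    have hpos : ∀ M : Multiset ℕ, (∀ x ∈ M, 0 < x) → M ≠ 0 → 0 < M.sum := by
      intro M hMp hM0
      obtain ⟨x, hx⟩ := Multiset.exists_mem_of_ne_zero hM0
      exact lt_of_lt_of_le (hMp x hx) (Multiset.single_le_sum (fun _ _ => Nat.zero_le _) x hx)
    have h1 := hpos M (fun x hx => hm x (Multiset.mem_add.2 (Or.inl hx))) (by rintro rfl; simp at h0)
    have h2 := hpos w (fun x hx => hm x (Multiset.mem_add.2 (Or.inr hx))) (by rintro rfl; simp at hne)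
    have h3 := Nat.le_of_dvd h1 (addOrderOf_dvd_of_nsmul_eq_zero hs)
    rw [Multiset.sum_add] at hsum
    omega

/-- weight estimate for a multiset of positive integers -/
theorem weight (m : Multiset ℕ) (hm : ∀ x ∈ m, 0 < x) (a : ℕ) (ha : 2 ≤ a) :
    2 * m.card + m.count a * (a - 2) ≤ m.sum + m.count 1 ∧ m.count a * a ≤ m.sum := by
  induction m using Multiset.induction_on with
  | empty => simp
  | cons x m ih =>
    obtain ⟨h1, h2⟩ := ih (fun y hy => hm y (Multiset.mem_cons_of_mem hy))
    have hx := hm x (Multiset.mem_cons_self _ _)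
    simp only [Multiset.card_cons, Multiset.sum_cons, Multiset.count_cons]
    by_cases hxa : a = x
    · subst hxa
      rw [if_pos rfl, if_neg (by omega), add_mul, add_mul]
      omega
    · rw [if_neg hxa]
      split_ifs with h
      · constructor <;> simp only [add_zero] <;> omega
      · constructor <;> simp only [add_zero] <;> omega

theorem nsmul_inj_range {n : ℕ} {g : G} (hg : addOrderOf g = n) {x y : ℕ} (hx : 0 < x) (hx' : x ≤ n)
    (hy : 0 < y) (hy' : y ≤ n) (h : x • g = y • g) : x = y := by
  have h1 := nsmul_eq_nsmul_iff_modEq.1 h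
  rw [hg] at h1
  rcases hx'.lt_or_eq with h2 | rfl
  · rcases hy'.lt_or_eq with h3 | rfl
    · exact Nat.ModEq.eq_of_lt_of_lt h1 h2 h3
    · have : x % y = y % y := h1
      rw [Nat.mod_self, Nat.mod_eq_of_lt h2] at this
      omega
  · rcases hy'.lt_or_eq with h3 | h3
    · have : x % x = y % x := h1
      rw [Nat.mod_self, Nat.mod_eq_of_lt h3] at this
      omega
    · exact h3.symm

theorem part_le {n : ℕ} {m : Multiset ℕ} (hs : m.sum = n) {x : ℕ} (hx : x ∈ m) : x ≤ n :=
  hs ▸ Multiset.single_le_sum (fun _ _ => Nat.zero_le _) x hx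

theorem count_map_smul {n : ℕ} {g : G} (hg : addOrderOf g = n) {m : Multiset ℕ}
    (hm : ∀ x ∈ m, 0 < x) (hs : m.sum = n) {y : ℕ} (hy : 0 < y) (hy' : y ≤ n) :
    (m.map (fun x => x • g)).count (y • g) = m.count y := by
  rw [Multiset.count_map, Multiset.count_eq_card_filter_eq]
  congr 1
  apply Multiset.filter_congr
  intro x hx
  constructor
  · intro h
    exact nsmul_inj_range hg hy hy' (hm x hx) (part_le hs hx) h
  · rintro rfl; rfl

theorem uniq_gen {n l : ℕ} (hl1 : n / 2 + 2 ≤ l) {g h : G} (hg : addOrderOf g = n)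
    (hh : addOrderOf h = n) {p q : Multiset ℕ} (hp : ∀ x ∈ p, 0 < x) (hq : ∀ x ∈ q, 0 < x)
    (hps : p.sum = n) (hqs : q.sum = n) (hpc : p.card = l) (hqc : q.card = l)
    (he : p.map (fun x => x • g) = q.map (fun x => x • h)) : g = h := by
  have hp0 := weight p hp 2 le_rfl
  have hq0 := weight q hq 2 le_rfl
  simp only [Nat.sub_self, mul_zero, add_zero] at hp0 hq0
  have hv : 3 ≤ p.count 1 := by omega
  have hv' : 3 ≤ q.count 1 := by omega
  have hgS : g ∈ q.map (fun x => x • h) := by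
    rw [← he]
    exact Multiset.mem_map.2 ⟨1, Multiset.count_pos.1 (by omega), one_smul _ _⟩
  have hhS : h ∈ p.map (fun x => x • g) := by
    rw [he]
    exact Multiset.mem_map.2 ⟨1, Multiset.count_pos.1 (by omega), one_smul _ _⟩
  obtain ⟨a, ha, hag⟩ := Multiset.mem_map.1 hgS
  obtain ⟨b, hb, hbh⟩ := Multiset.mem_map.1 hhS
  have ha0 := hq a ha
  have hb0 := hp b hb
  have han := part_le hqs ha
  have hbn := part_le hps hb
  by_contra hne
  have ha2 : 2 ≤ a := by
    by_contra hc
    have : a = 1 := by omega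
    subst this
    exact hne (by simpa using hag.symm)
  have hb2 : 2 ≤ b := by
    by_contra hc
    have : b = 1 := by omega
    subst this
    exact hne (by simpa using hbh)
  have hca : q.count a = p.count 1 := by
    rw [← count_map_smul hh hq hqs ha0 han, ← count_map_smul hg hp hps one_pos (by omega), he]
    simp only [hag, one_smul]
  have hcb : p.count b = q.count 1 := by
    rw [← count_map_smul hg hp hps hb0 hbn, ← count_map_smul hh hq hqs one_pos (by omega), he]
    simp only [hbh, one_smul]
  obtain ⟨wp1, wp2⟩ := weight p hp b hb2
  obtain ⟨wq1, wq2⟩ := weight q hq a ha2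
  rw [hcb] at wp1 wp2
  rw [hca] at wq1 wq2
  have hab : (a * b) • g = 1 • g := by
    rw [mul_smul, hbh, hag, one_smul]
  have hmod := nsmul_eq_nsmul_iff_modEq.1 hab
  rw [hg] at hmod
  have hdvd : n ∣ a * b - 1 := (Nat.modEq_iff_dvd' (by nlinarith)).1 hmod.symm
  have hge : n ≤ a * b - 1 := Nat.le_of_dvd (by have : 2 * 2 ≤ a * b := Nat.mul_le_mul ha2 hb2
                                                omega) hdvd
  have hvb : 3 * b ≤ n := by nlinarith
  have hva : 3 * a ≤ n := by nlinarith
  rcases ha2.lt_or_eq with h1 | rfl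
  · rcases hb2.lt_or_eq with h2 | rfl
    · have e1 : p.count 1 * 1 ≤ p.count 1 * (a - 2) := Nat.mul_le_mul_left _ (by omega)
      have e2 : q.count 1 * 1 ≤ q.count 1 * (b - 2) := Nat.mul_le_mul_left _ (by omega)
      omega
    · omega
  · omega

theorem map_smul_inj {n : ℕ} {g : G} (hg : addOrderOf g = n) {p q : Multiset ℕ}
    (hp : ∀ x ∈ p, 0 < x) (hq : ∀ x ∈ q, 0 < x) (hps : p.sum = n) (hqs : q.sum = n)
    (he : p.map (fun x => x • g) = q.map (fun x => x • g)) : p = q := by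
  ext y
  by_cases hy : 0 < y ∧ y ≤ n
  · rw [← count_map_smul hg hp hps hy.1 hy.2, he, count_map_smul hg hq hqs hy.1 hy.2]
  · rw [Multiset.count_eq_zero_of_notMem, Multiset.count_eq_zero_of_notMem]
    · exact fun h => hy ⟨hq y h, part_le hqs h⟩
    · exact fun h => hy ⟨hp y h, part_le hps h⟩

end aux


/-- For a cyclic group `G` of order `n ≥ 3` and `⌊n/2⌋ + 2 ≤ ℓ ≤ n`, the number of
minimal zero-sum sequences over `G` of length `ℓ` equals `Φ(n)·p_ℓ(n)`, where `Φ` is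
Euler's totient function and `p_ℓ(n)` is the number of partitions of `n` into `ℓ`
positive summands. -/
theorem stmt18 {G : Type*} [AddCommGroup G] [Fintype G] [IsAddCyclic G]
    (n : ℕ) (hn : Fintype.card G = n) (h3 : 3 ≤ n)
    (l : ℕ) (hl1 : n / 2 + 2 ≤ l) (hl2 : l ≤ n) :
    Set.ncard {S : Multiset G | IsMinimalZeroSum S ∧ Multiset.card S = l} =
      Nat.totient n * Nat.card {p : n.Partition // Multiset.card p.parts = l} := by
  classical
  let Φ : {g : G // addOrderOf g = n} × {p : n.Partition // Multiset.card p.parts = l} →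
      Multiset G := fun gp => gp.2.1.parts.map (fun x => x • gp.1.1)
  have hinj : Function.Injective Φ := by
    rintro ⟨⟨g, hg⟩, ⟨p, hp⟩⟩ ⟨⟨h, hh⟩, ⟨q, hq⟩⟩ he
    simp only [Φ] at he
    have hgh : g = h := uniq_gen hl1 hg hh (fun x hx => p.parts_pos hx) (fun x hx => q.parts_pos hx)
      p.parts_sum q.parts_sum hp hq he
    subst hgh
    have hpq := map_smul_inj hg (fun x hx => p.parts_pos hx) (fun x hx => q.parts_pos hx)
      p.parts_sum q.parts_sum he
    have hpq' : p = q := Nat.Partition.ext hpq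
    subst hpq'
    rfl
  have hset : {S : Multiset G | IsMinimalZeroSum S ∧ Multiset.card S = l} = Set.image Φ Set.univ := by
    ext S
    simp only [Set.mem_ofPred_eq, Set.image_univ, Set.mem_range]
    constructor
    · rintro ⟨h1, h2⟩
      obtain ⟨g, m, h4, h5, h6, h7⟩ := minimal_form hn hl1 h1 h2
      refine ⟨⟨⟨g, h4⟩, ⟨⟨m, fun {i} hi => h5 i hi, h6⟩, ?_⟩⟩, h7⟩
      rw [← h2, ← h7, Multiset.card_map]
    · rintro ⟨⟨⟨g, hg⟩, ⟨p, hp⟩⟩, rfl⟩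
      refine ⟨form_minimal hg ?_ (fun x hx => p.parts_pos hx) p.parts_sum, ?_⟩
      · intro h0
        rw [h0] at hp
        simp at hp
        omega
      · simp only [Φ, Multiset.card_map]
        exact hp
  rw [hset, Set.ncard_image_of_injective _ hinj, Set.ncard_univ, Nat.card_prod]
  congr 1
  rw [Nat.card_eq_fintype_card, Fintype.card_subtype]
  exact IsAddCyclic.card_addOrderOf_eq_totient (hn ▸ dvd_rfl)
end
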